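/- Let 𝒯 be an admissible T-mesh, let Q ∈ H^d be a cell with Q ⊆ AR_p, and let j be a direction such that the midpoint (inf Q_j + sup Q_j)/2 is an integer. Then the refined mesh subdiv(𝒯, Q, j) is again an admissible T-mesh: for every direction k, the refinement creates no T-junction with pointing direction k or orthogonal direction k inside the k-th frame region FR^(k), and the slices S_k(n) for n ∈ {0,…,⌊(p_k+1)/2⌋} ∪ {N_k−⌊(p_k+1)/2⌋,…,N_k} remain contained in the k-orthogonal skeleton. -/

import Mathlib

/-!
Admissibility is rephrased as two statements about cells: no cell is crossed by a frame slice
(`NoCross`), and the mesh is conforming across every interior frame slice, i.e. touching cells on the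
two sides have the same cross-section (`Matched`). The first follows from the frame slices lying in
the skeleton. The second holds because an endpoint of one cross-section inside the other produces a
T-junction pointing towards the slice (`no_TJ`), and conversely the two properties exclude T-junctions
with direction `k` in `FR^(k)` (`noTJ_of_matched`). Both directions use the structure of meshes built
by bisections (`Regular`): an entity meeting a closed cell lies in it, which rests on the nesting
of dyadic intervals, and each singleton component is an endpoint of some adjacent cell.

In an admissible mesh the frame therefore consists of unit layers repeating the cross-sections of the
active region, so the extended region of `subdiv(𝒯, Q, j)` is filled by whole cells, namely the
products of `Q_k` or unit intervals of the touched frame (`opt_mem`), all with `j`-th component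
`Q_j`. Hence `subdiv` amounts to bisecting these cells one after the other, and its outcome is again
a T-mesh (`exists_subdiv`). The skeletons only grow (`skel_mono`), so the slice condition and
`NoCross` persist. `Matched` persists (`matched_split`): the midpoint of `Q_j` is not a frame index
since `Q ⊆ AR_p`, and for `k ≠ j` the extended region continues across frame slices orthogonal to `k`,
so the cells on the two sides are split simultaneously.
-/

open Set

namespace TSpline

/-- A box in `ℝ^d`, given componentwise. -/
abbrev Box (d : ℕ) := Fin d → Set ℝ

/-- The subset of `ℝ^d` determined by a box. -/
def toSet {d : ℕ} (E : Box d) : Set (Fin d → ℝ) := Set.pi Set.univ E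

/-- The closed index domain `cl Ω = ∏ₖ [0, Nₖ]`. -/
def domain {d : ℕ} (N : Fin d → ℕ) : Set (Fin d → ℝ) :=
  Set.pi Set.univ (fun k => Set.Icc (0 : ℝ) (N k))

/-- The boundary `∂Ω` of the index domain. -/
def bdryDomain {d : ℕ} (N : Fin d → ℕ) : Set (Fin d → ℝ) := frontier (domain N)

/-- A component which is an integer singleton `{n}`, `0 ≤ n ≤ Nₖ`. -/
def IsSingletonComp (Nk : ℕ) (S : Set ℝ) : Prop :=
  ∃ n : ℕ, n ≤ Nk ∧ S = {(n : ℝ)}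

/-- A component which is an open interval with integer endpoints in `[0, Nₖ]`. -/
def IsIntervalComp (Nk : ℕ) (S : Set ℝ) : Prop :=
  ∃ a b : ℕ, a < b ∧ b ≤ Nk ∧ S = Set.Ioo (a : ℝ) (b : ℝ)

/-- A mesh entity: every component is an integer singleton or an open integer interval. -/
def IsMeshEntity {d : ℕ} (N : Fin d → ℕ) (E : Box d) : Prop :=
  ∀ k, IsSingletonComp (N k) (E k) ∨ IsIntervalComp (N k) (E k)

/-- The directions in which an entity has a singleton component. -/
def singDirs {d : ℕ} (E : Box d) : Set (Fin d) := {i | ∃ r : ℝ, E i = {r}}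

/-- Split all entities of `M` contained in the region `D` whose `j`-th component is `Q j`
into the three children obtained by bisecting the `j`-th component at `m`. -/
def midSplit {d : ℕ} (M : Set (Box d)) (Q : Box d) (j : Fin d) (m : ℝ) (D : Box d) :
    Set (Box d) :=
  (M \ {E | E ∈ M ∧ (∀ k, E k ⊆ D k) ∧ E j = Q j}) ∪
  ⋃ E ∈ {E | E ∈ M ∧ (∀ k, E k ⊆ D k) ∧ E j = Q j},
    ({Function.update E j (Set.Ioo (sInf (Q j)) m),
      Function.update E j {m},
      Function.update E j (Set.Ioo m (sSup (Q j)))} : Set (Box d))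

/-- One symmetric bisection of a `d`-dimensional cell with integer midpoint. -/
def BisectStep {d : ℕ} (N : Fin d → ℕ) (M M' : Set (Box d)) : Prop :=
  ∃ Q ∈ M, ∃ j : Fin d, ∃ a b mid : ℕ,
    (∀ k, IsIntervalComp (N k) (Q k)) ∧
    Q j = Set.Ioo (a : ℝ) (b : ℝ) ∧ a + b = 2 * mid ∧
    M' = midSplit M Q j (mid : ℝ) (fun k => closure (Q k))

/-- A tensor-product mesh with integer breakpoints. -/
def IsTensorMesh {d : ℕ} (N : Fin d → ℕ) (M : Set (Box d)) : Prop :=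
  ∃ G : Fin d → Finset ℕ,
    (∀ k, 0 ∈ G k ∧ N k ∈ G k ∧ ∀ n ∈ G k, n ≤ N k) ∧
    M = {E | ∀ k, (∃ n ∈ G k, E k = {(n : ℝ)}) ∨
          (∃ a ∈ G k, ∃ b ∈ G k, a < b ∧ (∀ c ∈ G k, c ≤ a ∨ b ≤ c) ∧
            E k = Set.Ioo (a : ℝ) (b : ℝ))}

/-- A T-mesh of the index domain: a finite disjoint partition of `cl Ω` into mesh
entities, obtained from a tensor-product mesh by repeated symmetric bisections. -/
structure TMesh (d : ℕ) (N : Fin d → ℕ) where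
  entities : Set (Box d)
  finite : entities.Finite
  mem_entity : ∀ E ∈ entities, IsMeshEntity N E
  union_eq : (⋃ E ∈ entities, toSet E) = domain N
  pairwise_disjoint : ∀ E ∈ entities, ∀ F ∈ entities, E ≠ F → toSet E ∩ toSet F = ∅
  constructed : ∃ M₀ : Set (Box d), IsTensorMesh N M₀ ∧
    Relation.ReflTransGen (BisectStep N) M₀ entities

variable {d : ℕ} {N : Fin d → ℕ}

/-- `H^k`: the entities with exactly `d - k` singleton components. -/
def Hdim (T : TMesh d N) (k : ℕ) : Set (Box d) :=
  {E ∈ T.entities | (singDirs E).ncard = d - k}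

/-- The `j`-orthogonal skeleton `Sk_j`. -/
def skel (T : TMesh d N) (j : Fin d) : Set (Fin d → ℝ) :=
  ⋃ F ∈ {F ∈ Hdim T (d - 1) | ∃ r : ℝ, F j = {r}}, closure (toSet F)

/-- The valence of a `(d-2)`-dimensional entity: the number of hyperfaces in whose
boundary it lies. -/
noncomputable def valence (T : TMesh d N) (J : Box d) : ℕ :=
  {F ∈ Hdim T (d - 1) | toSet J ⊆ frontier (toSet F)}.ncard

/-- A T-junction (hanging interface). -/
def IsTJunction (T : TMesh d N) (J : Box d) : Prop :=
  J ∈ Hdim T (d - 2) ∧ ¬ toSet J ⊆ bdryDomain N ∧ valence T J < 4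

/-- `TJData T J Q i j`: `Q` is an associated cell of the T-junction `J`, with orthogonal
direction `i` and pointing direction `j`. -/
def TJData (T : TMesh d N) (J Q : Box d) (i j : Fin d) : Prop :=
  Q ∈ Hdim T d ∧ toSet J ⊆ frontier (toSet Q) ∧
  closure (toSet J) ∩ Set.pi Set.univ (fun k => frontier (Q k)) = ∅ ∧
  i ≠ j ∧ (∃ r : ℝ, J i = {r}) ∧ (∃ r : ℝ, J j = {r}) ∧
  J i ⊆ Q i ∧ J i ≠ Q i ∧ J j ⊆ frontier (Q j)

/-- `⌊(p_k + 1)/2⌋`. -/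
def halfdeg (p : Fin d → ℕ) (k : Fin d) : ℕ := (p k + 1) / 2

/-- The active region `AR_p`. -/
def activeRegion (N p : Fin d → ℕ) : Set (Fin d → ℝ) :=
  Set.pi Set.univ (fun k => Set.Icc (halfdeg p k : ℝ) ((N k : ℝ) - (halfdeg p k : ℝ)))

/-- The slice `S_k(n)`. -/
def slice (N : Fin d → ℕ) (k : Fin d) (n : ℕ) : Set (Fin d → ℝ) :=
  {x ∈ domain N | x k = (n : ℝ)}

/-- The `k`-th frame region `FR^(k)`. -/
def frameRegion (N p : Fin d → ℕ) (k : Fin d) : Set (Fin d → ℝ) :=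
  {x ∈ domain N | x k ∈ Set.Icc (0 : ℝ) (halfdeg p k : ℝ) ∪
      Set.Icc ((N k : ℝ) - (halfdeg p k : ℝ)) (N k : ℝ)}

/-- Admissibility of a T-mesh. -/
def Admissible (p : Fin d → ℕ) (T : TMesh d N) : Prop :=
  (∀ k : Fin d, ∀ J Q : Box d, ∀ i j : Fin d, IsTJunction T J → TJData T J Q i j →
      (i = k ∨ j = k) → ¬ toSet J ⊆ frameRegion N p k) ∧
  (∀ k : Fin d, ∀ n : ℕ, (n ≤ halfdeg p k ∨ (N k - halfdeg p k ≤ n ∧ n ≤ N k)) →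
      slice N k n ⊆ skel T k)

/-- Anchors of degree `p`. -/
def IsAnchor (p : Fin d → ℕ) (T : TMesh d N) (A : Box d) : Prop :=
  A ∈ T.entities ∧ toSet A ⊆ activeRegion N p ∧
  ∀ j : Fin d, (∃ r : ℝ, A j = {r}) ↔ Odd (p j)

/-- `P_{j,n}(E)`: replace the `j`-th component of `E` by `{n}`. -/
def proj {d : ℕ} (E : Box d) (j : Fin d) (n : ℕ) : Box d :=
  Function.update E j {(n : ℝ)}

/-- The global knot vector `gv_j(E)` (as a set of integer indices). -/
def gv (T : TMesh d N) (j : Fin d) (E : Box d) : Set ℕ :=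
  {n | n ≤ N j ∧ toSet (proj E j n) ⊆ skel T j}

/-- `V` is a block of consecutive entries of `G`. -/
def IsBlockOf (V G : Set ℕ) : Prop :=
  V ⊆ G ∧ V.Finite ∧ ∀ g ∈ G, ∀ a ∈ V, ∀ b ∈ V, a ≤ g → g ≤ b → g ∈ V

/-- Two knot vectors overlap (`⋈`): both occur as blocks of consecutive entries of a
common knot vector. -/
def Overlaps (V₁ V₂ : Set ℕ) : Prop :=
  ∃ W : Set ℕ, W.Finite ∧ IsBlockOf V₁ W ∧ IsBlockOf V₂ W

/-- The convex hull in `ℝ` of a set of integer indices. -/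
def convOf (V : Set ℕ) : Set ℝ := convexHull ℝ ((fun n : ℕ => (n : ℝ)) '' V)

/-- The local knot vector of an anchor `A` in direction `j`: the block of `p_j + 2`
consecutive entries of `gv_j(A)` whose entry of rank `⌊(p_j+1)/2⌋` is `inf A_j`. -/
def IsAnchorKV (T : TMesh d N) (p : Fin d → ℕ) (A : Box d) (j : Fin d) (V : Set ℕ) : Prop :=
  IsBlockOf V (gv T j A) ∧ V.ncard = p j + 2 ∧
  ∃ a : ℕ, (a : ℝ) = sInf (A j) ∧ a ∈ V ∧ {v ∈ V | v < a}.ncard = halfdeg p j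

open Classical in
noncomputable def anchorKV (T : TMesh d N) (p : Fin d → ℕ) (A : Box d) (j : Fin d) :
    Set ℕ :=
  if h : ∃ V, IsAnchorKV T p A j V then h.choose else ∅

/-- The index support of an anchor. -/
noncomputable def suppA (T : TMesh d N) (p : Fin d → ℕ) (A : Box d) : Set (Fin d → ℝ) :=
  Set.pi Set.univ (fun k => convOf (anchorKV T p A k))

/-- The local knot vector of a T-junction `J` (with associated cell `Q`, orthogonal
direction `i`, pointing direction `j`) in direction `k`. -/
def IsTJKV (T : TMesh d N) (p : Fin d → ℕ) (J Q : Box d) (i j k : Fin d) (V : Set ℕ) :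
    Prop :=
  if k = i then ∃ t : ℕ, J i = {(t : ℝ)} ∧ V = {t}
  else if k = j then
    IsBlockOf V (gv T j J) ∧ V.ncard = p j + 1 ∧
    ((Even (p j) ∧ ∃ t : ℕ, J j = {(t : ℝ)} ∧ t ∈ V ∧ {v ∈ V | v < t}.ncard = p j / 2) ∨
     (Odd (p j) ∧ ∃ a b : ℕ, (a : ℝ) = sInf (Q j) ∧ (b : ℝ) = sSup (Q j) ∧ a ∈ V ∧ b ∈ V ∧
        {v ∈ V | v < a}.ncard = p j / 2 ∧ {v ∈ V | v < b}.ncard = p j / 2 + 1))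
  else
    IsBlockOf V (gv T k J) ∧ V.ncard = p k + 2 + p k % 2 ∧
    ∃ a b : ℕ, a ∈ V ∧ b ∈ V ∧ J k = Set.Ioo (a : ℝ) (b : ℝ) ∧
      {v ∈ V | v < a}.ncard = (p k + 1) / 2 ∧ {v ∈ V | v < b}.ncard = (p k + 1) / 2 + 1

/-- Local knot vector of a T-junction, quantifying over the (unique) associated data. -/
def IsTJKVFull (T : TMesh d N) (p : Fin d → ℕ) (J : Box d) (k : Fin d) (V : Set ℕ) :
    Prop :=
  ∃ Q : Box d, ∃ i j : Fin d, TJData T J Q i j ∧ IsTJKV T p J Q i j k V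

open Classical in
noncomputable def tjKV (T : TMesh d N) (p : Fin d → ℕ) (J : Box d) (k : Fin d) : Set ℕ :=
  if h : ∃ V, IsTJKVFull T p J k V then h.choose else ∅

/-- The geometric T-junction extension `GTJ(J)`. -/
noncomputable def GTJ (T : TMesh d N) (p : Fin d → ℕ) (J : Box d) : Set (Fin d → ℝ) :=
  Set.pi Set.univ (fun k => convOf (tjKV T p J k))

/-- `J` is a T-junction with orthogonal direction `i` and pointing direction `j`. -/
def HasDirs (T : TMesh d N) (J : Box d) (i j : Fin d) : Prop :=
  IsTJunction T J ∧ ∃ Q : Box d, TJData T J Q i j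

/-- Strong geometric analysis-suitability. -/
def SGAS (T : TMesh d N) (p : Fin d → ℕ) : Prop :=
  ∀ J₁ J₂ : Box d, ∀ i₁ j₁ i₂ j₂ : Fin d,
    HasDirs T J₁ i₁ j₁ → HasDirs T J₂ i₂ j₂ → i₁ ≠ i₂ →
    GTJ T p J₁ ∩ GTJ T p J₂ = ∅

/-- Weak geometric analysis-suitability. -/
def WGAS (T : TMesh d N) (p : Fin d → ℕ) : Prop :=
  ∀ J₁ J₂ : Box d, ∀ i₁ j₁ i₂ j₂ : Fin d,
    HasDirs T J₁ i₁ j₁ → HasDirs T J₂ i₂ j₂ → i₁ ≠ i₂ → j₁ ≠ j₂ →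
    GTJ T p J₁ ∩ GTJ T p J₂ = ∅

/-- The abstract T-junction extension `ATJ_j(n)`. -/
noncomputable def ATJ (T : TMesh d N) (p : Fin d → ℕ) (j : Fin d) (n : ℕ) :
    Set (Fin d → ℝ) :=
  slice N j n ∩
  (⋃ A ∈ {A : Box d | IsAnchor p T A ∧ n ∈ gv T j A}, suppA T p A) ∩
  (⋃ A ∈ {A : Box d | IsAnchor p T A ∧ n ∉ gv T j A}, suppA T p A)

/-- `ATJ_j = ⋃ₙ ATJ_j(n)`. -/
noncomputable def ATJfull (T : TMesh d N) (p : Fin d → ℕ) (j : Fin d) :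
    Set (Fin d → ℝ) :=
  ⋃ n ∈ Set.Iic (N j), ATJ T p j n

/-- Abstract analysis-suitability. -/
def AAS (T : TMesh d N) (p : Fin d → ℕ) : Prop :=
  ∀ i j : Fin d, i ≠ j → ∀ n m : ℕ, n ≤ N i → m ≤ N j →
    ATJ T p i n ∩ ATJ T p j m = ∅

/-- Two anchors weakly partially overlap. -/
def WeakPartOverlap (T : TMesh d N) (p : Fin d → ℕ) (A₁ A₂ : Box d) : Prop :=
  ∃ ℓ : Fin d, anchorKV T p A₁ ℓ ≠ anchorKV T p A₂ ℓ ∧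
    Overlaps (anchorKV T p A₁ ℓ) (anchorKV T p A₂ ℓ)

/-- Two anchors strongly partially overlap. -/
def StrongPartOverlap (T : TMesh d N) (p : Fin d → ℕ) (A₁ A₂ : Box d) : Prop :=
  suppA T p A₁ ∩ suppA T p A₂ = ∅ ∨
  d - 1 ≤ {k : Fin d | Overlaps (anchorKV T p A₁ k) (anchorKV T p A₂ k)}.ncard

/-- Weak dual-compatibility. -/
def WDC (T : TMesh d N) (p : Fin d → ℕ) : Prop :=
  ∀ A₁ A₂ : Box d, IsAnchor p T A₁ → IsAnchor p T A₂ → A₁ ≠ A₂ →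
    WeakPartOverlap T p A₁ A₂

/-- Strong dual-compatibility. -/
def SDC (T : TMesh d N) (p : Fin d → ℕ) : Prop :=
  ∀ A₁ A₂ : Box d, IsAnchor p T A₁ → IsAnchor p T A₂ → A₁ ≠ A₂ →
    StrongPartOverlap T p A₁ A₂

/-- `Q'` is a neighboring cell of `Q` in direction `ℓ`. -/
def NeighborInDir (T : TMesh d N) (Q Q' : Box d) (ℓ : Fin d) : Prop :=
  Q' ∈ Hdim T d ∧ Q' ≠ Q ∧
  (sSup (Q ℓ) = sInf (Q' ℓ) ∨ sSup (Q' ℓ) = sInf (Q ℓ)) ∧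
  ∀ k : Fin d, k ≠ ℓ → (Q k ∩ Q' k).Nonempty

/-- Assumption A: every cell has neighbor cells in the active region in at least three
pairwise distinct directions. -/
def AssumptionA (T : TMesh d N) (p : Fin d → ℕ) : Prop :=
  ∀ Q ∈ Hdim T d, ∃ l₁ l₂ l₃ : Fin d, l₁ ≠ l₂ ∧ l₁ ≠ l₃ ∧ l₂ ≠ l₃ ∧
    ∀ l ∈ ({l₁, l₂, l₃} : Set (Fin d)),
      ∃ Q' : Box d, NeighborInDir T Q Q' l ∧ toSet Q' ⊆ activeRegion N p

/-- The extended region `D` of Algorithm `subdiv`. -/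
def extendD (N p : Fin d → ℕ) (Q : Box d) (j : Fin d) : Box d := fun ℓ =>
  closure (Q ℓ) ∪
  {x : ℝ | ℓ ≠ j ∧ sInf (Q ℓ) = (halfdeg p ℓ : ℝ) ∧
      x ∈ Set.Icc (0 : ℝ) (halfdeg p ℓ : ℝ)} ∪
  {x : ℝ | ℓ ≠ j ∧ sSup (Q ℓ) = (N ℓ : ℝ) - (halfdeg p ℓ : ℝ) ∧
      x ∈ Set.Icc ((N ℓ : ℝ) - (halfdeg p ℓ : ℝ)) (N ℓ : ℝ)}

/-- The entity set produced by Algorithm `subdiv(𝒯, Q, j)`. -/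
def subdivEntities (N p : Fin d → ℕ) (M : Set (Box d)) (Q : Box d) (j : Fin d) :
    Set (Box d) :=
  midSplit M Q j ((sInf (Q j) + sSup (Q j)) / 2) (extendD N p Q j)

open Classical in
/-- The componentwise minimal bounding box `M(E,F)`. -/
noncomputable def MBox {d : ℕ} (E F : Box d) : Box d := fun ℓ =>
  if (E ℓ ∩ F ℓ).Nonempty then E ℓ ∩ F ℓ
  else if sSup (E ℓ) ≤ sInf (F ℓ) then Set.Icc (sSup (E ℓ)) (sInf (F ℓ))
  else Set.Icc (sSup (F ℓ)) (sInf (E ℓ))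

/-- `V` is the local knot vector of `E` (an anchor or a T-junction) in direction `j`. -/
def IsLocalKVOf (T : TMesh d N) (p : Fin d → ℕ) (E : Box d) (j : Fin d) (V : Set ℕ) :
    Prop :=
  (IsAnchor p T E ∧ IsAnchorKV T p E j V) ∨
  (IsTJunction T E ∧ IsTJKVFull T p E j V)

end TSpline

namespace TSpline

/-! ### Integer boxes and the splitting operation -/

/-- The component with integer endpoints `a ≤ b`: the singleton `{a}` if `a = b`, and the open
interval `(a, b)` otherwise. -/
def comp (a b : ℕ) : Set ℝ := if a = b then {(a : ℝ)} else Set.Ioo (a : ℝ) (b : ℝ)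

/-- The mesh entity with lower corner `lo` and upper corner `hi`. Every mesh entity is of this
form (`exists_box`), and it is a cell exactly when `lo k < hi k` for all `k`. -/
def box {d : ℕ} (lo hi : Fin d → ℕ) : Box d := fun k => comp (lo k) (hi k)

theorem comp_self (a : ℕ) : comp a a = {(a : ℝ)} := by simp [comp]

theorem comp_of_lt {a b : ℕ} (h : a < b) : comp a b = Set.Ioo (a : ℝ) (b : ℝ) := by
  simp [comp, h.ne]

theorem mem_comp {a b : ℕ} {x : ℝ} :
    x ∈ comp a b ↔ (a = b ∧ x = a) ∨ (a ≠ b ∧ (a : ℝ) < x ∧ x < b) := by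
  unfold comp
  split_ifs with h <;> simp [h]

theorem closure_comp {a b : ℕ} (_h : a ≤ b) : closure (comp a b) = Set.Icc (a : ℝ) b := by
  unfold comp
  split_ifs with h
  · subst h; simp
  · exact closure_Ioo (by exact_mod_cast h)

theorem comp_subset_Icc {a b : ℕ} (h : a ≤ b) : comp a b ⊆ Set.Icc (a : ℝ) b :=
  closure_comp h ▸ subset_closure

theorem comp_nonempty {a b : ℕ} (h : a ≤ b) : (comp a b).Nonempty := by
  rw [← closure_nonempty_iff, closure_comp h]
  exact ⟨a, by simpa using h⟩

theorem comp_subset_Icc_iff {p q a b : ℕ} (h : p ≤ q) :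
    comp p q ⊆ Set.Icc (a : ℝ) b ↔ a ≤ p ∧ q ≤ b := by
  rw [← isClosed_Icc.closure_subset_iff, closure_comp h,
    Set.Icc_subset_Icc_iff (by exact_mod_cast h)]
  norm_cast

theorem comp_inj {a b c e : ℕ} (h : a ≤ b) (h' : c ≤ e) (H : comp a b = comp c e) :
    a = c ∧ b = e := by
  have h1 := (comp_subset_Icc_iff (a := c) (b := e) h).1 (H ▸ comp_subset_Icc h')
  have h2 := (comp_subset_Icc_iff (a := a) (b := b) h').1 (H ▸ comp_subset_Icc h)
  omega

theorem comp_singleton {a b : ℕ} (h : a ≤ b) : (∃ r : ℝ, comp a b = {r}) ↔ a = b := by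
  constructor
  · rintro ⟨r, hr⟩
    have h1 := closure_comp h
    rw [hr, closure_singleton] at h1
    have ha : (a : ℝ) ∈ ({r} : Set ℝ) := h1 ▸ ⟨le_rfl, by exact_mod_cast h⟩
    have hb : (b : ℝ) ∈ ({r} : Set ℝ) := h1 ▸ ⟨by exact_mod_cast h, le_rfl⟩
    simp only [Set.mem_singleton_iff] at ha hb
    exact_mod_cast ha.trans hb.symm
  · rintro rfl; exact ⟨a, comp_self a⟩

theorem box_inj {d : ℕ} {lo hi c e : Fin d → ℕ} (h : ∀ k, lo k ≤ hi k) (h' : ∀ k, c k ≤ e k)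
    (H : box lo hi = box c e) : lo = c ∧ hi = e :=
  ⟨funext fun k => (comp_inj (h k) (h' k) (congrFun H k)).1,
    funext fun k => (comp_inj (h k) (h' k) (congrFun H k)).2⟩

theorem exists_box {d : ℕ} {N : Fin d → ℕ} {E : Box d} (h : IsMeshEntity N E) :
    ∃ lo hi : Fin d → ℕ, (∀ k, lo k ≤ hi k) ∧ (∀ k, hi k ≤ N k) ∧ E = box lo hi := by
  have : ∀ k, ∃ a b : ℕ, a ≤ b ∧ b ≤ N k ∧ E k = comp a b := by
    intro k
    rcases h k with ⟨n, hn, hE⟩ | ⟨a, b, hab, hb, hE⟩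
    · exact ⟨n, n, le_rfl, hn, by rw [hE, comp_self]⟩
    · exact ⟨a, b, hab.le, hb, by rw [hE, comp_of_lt hab]⟩
  choose lo hi h1 h2 h3 using this
  exact ⟨lo, hi, h1, h2, funext h3⟩

theorem box_entity {d : ℕ} {N : Fin d → ℕ} {lo hi : Fin d → ℕ} (h : ∀ k, lo k ≤ hi k)
    (h' : ∀ k, hi k ≤ N k) : IsMeshEntity N (box lo hi) := by
  intro k
  rcases (h k).eq_or_lt with hk | hk
  · exact Or.inl ⟨hi k, h' k, by simp [box, hk, comp_self]⟩
  · exact Or.inr ⟨lo k, hi k, hk, h' k, by simp [box, comp_of_lt hk]⟩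

theorem hi_le {d : ℕ} {N : Fin d → ℕ} {lo hi : Fin d → ℕ} (h : ∀ k, lo k ≤ hi k)
    (hE : IsMeshEntity N (box lo hi)) (k : Fin d) : hi k ≤ N k := by
  obtain ⟨l, u, h1, h2, h3⟩ := exists_box hE
  obtain ⟨rfl, rfl⟩ := box_inj h h1 h3
  exact h2 k

theorem mem_toSet_box {d : ℕ} {lo hi : Fin d → ℕ} {x : Fin d → ℝ} :
    x ∈ toSet (box lo hi) ↔ ∀ k, x k ∈ comp (lo k) (hi k) := by
  simp [toSet, box]

theorem closure_toSet_box {d : ℕ} {lo hi : Fin d → ℕ} (h : ∀ k, lo k ≤ hi k) :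
    closure (toSet (box lo hi)) = Set.pi Set.univ fun k => Set.Icc (lo k : ℝ) (hi k) := by
  rw [toSet, closure_pi_set]
  congr 1
  funext k
  exact closure_comp (h k)

theorem singDirs_box {d : ℕ} {lo hi : Fin d → ℕ} (h : ∀ k, lo k ≤ hi k) :
    singDirs (box lo hi) = {k | lo k = hi k} := by
  ext k
  exact comp_singleton (h k)

/-- Split at `m`, in direction `j`, all entities of `M` satisfying `P`; it is applied to `P`
implying that the `j`-th component is `comp a b`. Both a single bisection and Algorithm `subdiv`
are of this form. -/
def splitOn {d : ℕ} (M : Set (Box d)) (j : Fin d) (a m b : ℕ) (P : Box d → Prop) :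
    Set (Box d) :=
  {E | E ∈ M ∧ ¬ P E} ∪
    {E | ∃ F ∈ M, P F ∧ (E = Function.update F j (comp a m) ∨
      E = Function.update F j (comp m m) ∨ E = Function.update F j (comp m b))}

theorem midSplit_eq {d : ℕ} (M : Set (Box d)) (Q : Box d) (j : Fin d) {a m b : ℕ} (D : Box d)
    (ham : a < m) (hmb : m < b) (hQ : Q j = comp a b) :
    midSplit M Q j (m : ℝ) D =
      splitOn M j a m b (fun E => (∀ k, E k ⊆ D k) ∧ E j = comp a b) := by
  have hab : (a : ℝ) < b := by exact_mod_cast ham.trans hmb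
  have h1 : sInf (Q j) = a := by rw [hQ, comp_of_lt (ham.trans hmb), csInf_Ioo hab]
  have h2 : sSup (Q j) = b := by rw [hQ, comp_of_lt (ham.trans hmb), csSup_Ioo hab]
  unfold midSplit splitOn
  rw [h1, h2, hQ, comp_of_lt ham, comp_of_lt hmb, comp_self]
  ext E
  simp only [Set.mem_union, Set.mem_sdiff, Set.mem_ofPred_eq, Set.mem_iUnion,
    Set.mem_insert_iff, Set.mem_singleton_iff, exists_prop]
  constructor
  · rintro (⟨h, h'⟩ | ⟨F, ⟨hF, h3⟩, h4⟩)
    · exact Or.inl ⟨h, fun h'' => h' ⟨h, h''⟩⟩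
    · exact Or.inr ⟨F, hF, h3, h4⟩
  · rintro (⟨h, h'⟩ | ⟨F, hF, h3, h4⟩)
    · exact Or.inl ⟨h, fun h'' => h' h''.2⟩
    · exact Or.inr ⟨F, ⟨hF, h3⟩, h4⟩

theorem update_box {d : ℕ} (lo hi : Fin d → ℕ) (j : Fin d) (u v : ℕ) :
    Function.update (box lo hi) j (comp u v) =
      box (Function.update lo j u) (Function.update hi j v) := by
  funext k
  by_cases h : k = j
  · subst h; simp [box]
  · simp [box, h]

/-- Membership in a split mesh in terms of corners: an entity is an unsplit entity of `M`, or it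
agrees off `j` with a split parent `box l u` and has one of the three new `j`-th components. -/
theorem mem_splitOn {d : ℕ} {N : Fin d → ℕ} {M : Set (Box d)} (hM : ∀ E ∈ M, IsMeshEntity N E)
    {j : Fin d} {a m b : ℕ} (ham : a < m) (hmb : m < b) {P : Box d → Prop}
    (hP : ∀ E, P E → E j = comp a b) {lo hi : Fin d → ℕ} (h : ∀ k, lo k ≤ hi k) :
    box lo hi ∈ splitOn M j a m b P ↔ (box lo hi ∈ M ∧ ¬ P (box lo hi)) ∨
      ∃ l u : Fin d → ℕ, (∀ k, l k ≤ u k) ∧ box l u ∈ M ∧ P (box l u) ∧ l j = a ∧ u j = b ∧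
        (∀ k, k ≠ j → lo k = l k ∧ hi k = u k) ∧
        ((lo j = a ∧ hi j = m) ∨ (lo j = m ∧ hi j = m) ∨ (lo j = m ∧ hi j = b)) := by
  unfold splitOn
  simp only [Set.mem_union, Set.mem_ofPred_eq]
  refine or_congr Iff.rfl ?_
  constructor
  · rintro ⟨F, hF, hPF, h4⟩
    obtain ⟨l, u, h1, -, rfl⟩ := exists_box (hM F hF)
    obtain ⟨h5, h6⟩ := comp_inj (h1 j) (ham.trans hmb).le (hP _ hPF)
    have key : ∀ s t : ℕ, s ≤ t → box lo hi = Function.update (box l u) j (comp s t) →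
        (∀ k, k ≠ j → lo k = l k ∧ hi k = u k) ∧ lo j = s ∧ hi j = t := by
      intro s t hst H
      refine ⟨fun k hk => ?_, ?_⟩
      · have := congrFun H k
        rw [Function.update_of_ne hk] at this
        exact comp_inj (h k) (h1 k) this
      · have := congrFun H j
        rw [Function.update_self] at this
        exact comp_inj (h j) hst this
    refine ⟨l, u, h1, hF, hPF, h5, h6, ?_⟩
    rcases h4 with h4 | h4 | h4
    · have := key _ _ ham.le h4; tauto
    · have := key _ _ le_rfl h4; tauto
    · have := key _ _ hmb.le h4; tauto
  · rintro ⟨l, u, h1, hF, hPF, h5, h6, h7, h8⟩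
    refine ⟨_, hF, hPF, ?_⟩
    have key : box lo hi = Function.update (box l u) j (comp (lo j) (hi j)) := by
      funext k
      by_cases hk : k = j
      · subst hk; simp [box]
      · simp [box, hk, h7 k hk]
    rcases h8 with h8 | h8 | h8 <;> rw [h8.1, h8.2] at key <;> tauto

theorem splitOn_entity {d : ℕ} {N : Fin d → ℕ} {M : Set (Box d)}
    (hM : ∀ E ∈ M, IsMeshEntity N E) {j : Fin d} {a m b : ℕ} (ham : a < m) (hmb : m < b)
    {P : Box d → Prop} (hP : ∀ E, P E → E j = comp a b) :
    ∀ E ∈ splitOn M j a m b P, IsMeshEntity N E := by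
  rintro E (hE | ⟨F, hF, hPF, h4⟩)
  · exact hM E hE.1
  · obtain ⟨l, u, h1, h2, rfl⟩ := exists_box (hM F hF)
    obtain ⟨h5, h6⟩ := comp_inj (h1 j) (ham.trans hmb).le (hP _ hPF)
    have h2j := h2 j
    have key : ∀ s t : ℕ, s ≤ t → t ≤ b → E = Function.update (box l u) j (comp s t) →
        IsMeshEntity N E := by
      rintro s t hst htb rfl
      rw [update_box]
      refine box_entity (fun k => ?_) (fun k => ?_)
      · by_cases hk : k = j
        · subst hk; simpa using hst
        · simpa [hk] using h1 k
      · by_cases hk : k = j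
        · subst hk; simp; omega
        · simpa [hk] using h2 k
    rcases h4 with h4 | h4 | h4
    · exact key _ _ ham.le hmb.le h4
    · exact key _ _ le_rfl hmb.le h4
    · exact key _ _ hmb.le le_rfl h4

/-! ### Dyadic intervals and regular meshes -/

/-- The second interval is one of the two halves of the first, which has an integer midpoint. -/
def Child (I I' : ℕ × ℕ) : Prop :=
  ∃ m, I.1 + I.2 = 2 * m ∧ I.1 < I.2 ∧ (I' = (I.1, m) ∨ I' = (m, I.2))

/-- The second interval arises from the first by repeated halving. -/
def Desc : ℕ × ℕ → ℕ × ℕ → Prop := Relation.ReflTransGen Child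

theorem Desc.bounds {I I' : ℕ × ℕ} (h : Desc I I') (hI : I.1 < I.2) :
    I.1 ≤ I'.1 ∧ I'.1 < I'.2 ∧ I'.2 ≤ I.2 := by
  induction h with
  | refl => exact ⟨le_rfl, hI, le_rfl⟩
  | tail _ hc ih =>
    obtain ⟨m, h1, h2, rfl | rfl⟩ := hc <;> simp only at * <;> omega

/-- The nesting alternative for dyadic intervals: they do not overlap, coincide, or one lies in a
half of the other. -/
def DyRel (I I' : ℕ × ℕ) : Prop :=
  I.2 ≤ I'.1 ∨ I'.2 ≤ I.1 ∨ (I.1 = I'.1 ∧ I.2 = I'.2) ∨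
  (I.1 ≤ I'.1 ∧ I'.2 ≤ I.2 ∧ (2 * I'.2 ≤ I.1 + I.2 ∨ I.1 + I.2 ≤ 2 * I'.1)) ∨
  (I'.1 ≤ I.1 ∧ I.2 ≤ I'.2 ∧ (2 * I.2 ≤ I'.1 + I'.2 ∨ I'.1 + I'.2 ≤ 2 * I.1))

theorem Desc.dyRel {R I I' : ℕ × ℕ} (h : Desc R I) (h' : Desc R I') (hR : R.1 < R.2) :
    DyRel I I' := by
  induction h using Relation.ReflTransGen.head_induction_on with
  | refl =>
    rcases Relation.ReflTransGen.cases_head h' with rfl | ⟨S, hS, hSI⟩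
    · simp [DyRel]
    · obtain ⟨m, h1, h2, rfl | rfl⟩ := hS
      · have := Desc.bounds hSI (by simp only; omega)
        simp only [DyRel] at *; omega
      · have := Desc.bounds hSI (by simp only; omega)
        simp only [DyRel] at *; omega
  | head hc hd ih =>
    rename_i R S
    have hS : S.1 < S.2 ∧ R.1 ≤ S.1 ∧ S.2 ≤ R.2 ∧ (2 * S.2 = R.1 + R.2 ∨ R.1 + R.2 = 2 * S.1) := by
      obtain ⟨m, h1, h2, rfl | rfl⟩ := hc <;> dsimp only <;> omega
    have hb := Desc.bounds hd hS.1
    rcases Relation.ReflTransGen.cases_head h' with rfl | ⟨S', hS', hSI⟩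
    · simp only [DyRel]; omega
    · by_cases hSS : S' = S
      · subst hSS; exact ih hSI hS.1
      · have hS2 : S'.1 < S'.2 ∧ R.1 ≤ S'.1 ∧ S'.2 ≤ R.2 ∧
            (2 * S'.2 = R.1 + R.2 ∧ S'.1 = R.1 ∨ R.1 + R.2 = 2 * S'.1 ∧ S'.2 = R.2) := by
          obtain ⟨m, h1, h2, rfl | rfl⟩ := hS' <;> dsimp only <;> omega
        have hS3 : (2 * S.2 = R.1 + R.2 ∧ S.1 = R.1 ∨ R.1 + R.2 = 2 * S.1 ∧ S.2 = R.2) := by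
          obtain ⟨m, h1, h2, rfl | rfl⟩ := hc <;> dsimp only <;> omega
        have hne : ¬ (S'.1 = S.1 ∧ S'.2 = S.2) := fun h => hSS (Prod.ext h.1 h.2)
        have hb' := Desc.bounds hSI hS2.1
        simp only [DyRel]; omega

/-- Intervals obtained by repeated halving from the gaps between consecutive breakpoints in `G`. -/
def Dyad (G : Finset ℕ) (I : ℕ × ℕ) : Prop :=
  ∃ a ∈ G, ∃ b ∈ G, a < b ∧ (∀ c ∈ G, c ≤ a ∨ b ≤ c) ∧ Desc (a, b) I

theorem Dyad.dyRel {G : Finset ℕ} {I I' : ℕ × ℕ} (h : Dyad G I) (h' : Dyad G I') :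
    DyRel I I' := by
  obtain ⟨a, ha, b, hb, hab, hc, hd⟩ := h
  obtain ⟨a', ha', b', hb', hab', hc', hd'⟩ := h'
  have h1 := hc a' ha'
  have h2 := hc b' hb'
  have h3 := hc' a ha
  have h4 := hc' b hb
  by_cases hE : a = a' ∧ b = b'
  · obtain ⟨rfl, rfl⟩ := hE
    exact hd.dyRel hd' hab
  · have := hd.bounds hab
    have := hd'.bounds hab'
    simp only [DyRel] at *
    omega

/-- The component `comp p q` meets the closed interval `[a, b]`, in terms of endpoints. -/
def Meets (p q a b : ℕ) : Prop := (p = q ∧ a ≤ p ∧ p ≤ b) ∨ (p < q ∧ a < q ∧ p < b)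

/-- The structural properties of meshes built by bisections from the tensor-product mesh with
breakpoints `G`, in terms of corners. All interval components are dyadic; an entity meeting a closed
cell lies in that closed cell (`fits`); and an entity that is a singleton in direction `k` lies in a
closed cell for which that singleton is an endpoint of the `k`-th component (`wit`). -/
structure Regular {d : ℕ} (N : Fin d → ℕ) (M : Set (Box d)) (G : Fin d → Finset ℕ) : Prop where
  ent : ∀ E ∈ M, IsMeshEntity N E
  dyad : ∀ lo hi : Fin d → ℕ, (∀ k, lo k ≤ hi k) → box lo hi ∈ M →
    ∀ k, lo k < hi k → Dyad (G k) (lo k, hi k)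
  fits : ∀ lo hi c e : Fin d → ℕ, (∀ k, lo k ≤ hi k) → (∀ k, c k < e k) → box lo hi ∈ M →
    box c e ∈ M → (∀ k, Meets (lo k) (hi k) (c k) (e k)) → ∀ k, c k ≤ lo k ∧ hi k ≤ e k
  wit : ∀ lo hi : Fin d → ℕ, (∀ k, lo k ≤ hi k) → box lo hi ∈ M → ∀ k, lo k = hi k →
    ∃ c e : Fin d → ℕ, (∀ l, c l < e l) ∧ box c e ∈ M ∧ (∀ l, c l ≤ lo l ∧ hi l ≤ e l) ∧
      (c k = lo k ∨ e k = lo k)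

/-- Every breakpoint is an endpoint of a gap between consecutive breakpoints. -/
theorem exists_adjacent {G : Finset ℕ} {n t : ℕ} (ht : 0 < t) (h0 : 0 ∈ G) (hN : t ∈ G)
    (hle : ∀ c ∈ G, c ≤ t) (hn : n ∈ G) :
    ∃ a ∈ G, ∃ b ∈ G, a < b ∧ (∀ c ∈ G, c ≤ a ∨ b ≤ c) ∧ (n = a ∨ n = b) := by
  rcases (hle n hn).lt_or_eq with h | h
  · have hne : (G.filter (n < ·)).Nonempty := ⟨t, by simp [hN, h]⟩
    have hm := Finset.min'_mem _ hne
    rw [Finset.mem_filter] at hm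
    refine ⟨n, hn, _, hm.1, hm.2, fun c hc => ?_, Or.inl rfl⟩
    by_contra! hcon
    exact absurd (Finset.min'_le (G.filter (n < ·)) c (Finset.mem_filter.2 ⟨hc, hcon.1⟩)) (by omega)
  · have hne : (G.filter (· < n)).Nonempty := ⟨0, by simp [h0]; omega⟩
    have hm := Finset.max'_mem _ hne
    rw [Finset.mem_filter] at hm
    refine ⟨_, hm.1, n, hn, hm.2, fun c hc => ?_, Or.inr rfl⟩
    by_contra! hcon
    exact absurd (Finset.le_max' (G.filter (· < n)) c (Finset.mem_filter.2 ⟨hc, hcon.2⟩)) (by omega)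

theorem mem_tensor {d : ℕ} {G : Fin d → Finset ℕ} {lo hi : Fin d → ℕ} (h : ∀ k, lo k ≤ hi k) :
    box lo hi ∈ {E : Box d | ∀ k, (∃ n ∈ G k, E k = {(n : ℝ)}) ∨
          (∃ a ∈ G k, ∃ b ∈ G k, a < b ∧ (∀ c ∈ G k, c ≤ a ∨ b ≤ c) ∧
            E k = Set.Ioo (a : ℝ) (b : ℝ))} ↔
    ∀ k, lo k ∈ G k ∧ hi k ∈ G k ∧ (∀ c ∈ G k, c ≤ lo k ∨ hi k ≤ c) := by
  refine forall_congr' fun k => ?_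
  constructor
  · rintro (⟨n, hn, hE⟩ | ⟨a, ha, b, hb, hab, hc, hE⟩)
    · rw [← comp_self] at hE
      obtain ⟨h1, h2⟩ := comp_inj (h k) le_rfl hE
      rw [h1, h2]
      exact ⟨hn, hn, fun c _ => le_total c n⟩
    · rw [← comp_of_lt hab] at hE
      obtain ⟨h1, h2⟩ := comp_inj (h k) hab.le hE
      rw [h1, h2]
      exact ⟨ha, hb, hc⟩
  · rintro ⟨h1, h2, h3⟩
    rcases (h k).eq_or_lt with hk | hk
    · exact Or.inl ⟨lo k, h1, by simp [box, ← hk, comp_self]⟩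
    · exact Or.inr ⟨lo k, h1, hi k, h2, hk, h3, by simp [box, comp_of_lt hk]⟩

theorem Regular.tensor {d : ℕ} {N : Fin d → ℕ} (hN : ∀ k, 0 < N k) {G : Fin d → Finset ℕ}
    (hG : ∀ k, 0 ∈ G k ∧ N k ∈ G k ∧ ∀ n ∈ G k, n ≤ N k) :
    Regular N {E : Box d | ∀ k, (∃ n ∈ G k, E k = {(n : ℝ)}) ∨
          (∃ a ∈ G k, ∃ b ∈ G k, a < b ∧ (∀ c ∈ G k, c ≤ a ∨ b ≤ c) ∧
            E k = Set.Ioo (a : ℝ) (b : ℝ))} G where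
  ent E hE k := by
    rcases hE k with ⟨n, hn, h⟩ | ⟨a, ha, b, hb, hab, hc, h⟩
    · exact Or.inl ⟨n, (hG k).2.2 n hn, h⟩
    · exact Or.inr ⟨a, b, hab, (hG k).2.2 b hb, h⟩
  dyad lo hi h hM k hk := by
    obtain ⟨h1, h2, h3⟩ := (mem_tensor h).1 hM k
    exact ⟨_, h1, _, h2, hk, h3, Relation.ReflTransGen.refl⟩
  fits lo hi c e h hce hM hC hmeet k := by
    obtain ⟨h1, h2, h3⟩ := (mem_tensor h).1 hM k
    obtain ⟨h4, h5, h6⟩ := (mem_tensor fun k => (hce k).le).1 hC k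
    have := hce k
    have := hmeet k
    have := h3 _ h4
    have := h3 _ h5
    have := h6 _ h1
    have := h6 _ h2
    unfold Meets at *
    omega
  wit lo hi h hM k hk := by
    rw [mem_tensor h] at hM
    have : ∀ l, ∃ c e : ℕ, c < e ∧ c ∈ G l ∧ e ∈ G l ∧ (∀ x ∈ G l, x ≤ c ∨ e ≤ x) ∧
        c ≤ lo l ∧ hi l ≤ e ∧ (lo l = hi l → c = lo l ∨ e = lo l) := by
      intro l
      obtain ⟨h1, h2, h3⟩ := hM l
      rcases (h l).eq_or_lt with hl | hl
      · obtain ⟨g0, gN, gle⟩ := hG l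
        obtain ⟨a, ha, b, hb, hab, hc, hn⟩ := exists_adjacent (hN l) g0 gN gle h1
        exact ⟨a, b, hab, ha, hb, hc, by omega, by omega, by omega⟩
      · exact ⟨lo l, hi l, hl, h1, h2, h3, le_rfl, le_rfl, fun _ => Or.inl rfl⟩
    choose c e h1 h2 h3 h4 h5 h6 h7 using this
    exact ⟨c, e, h1, (mem_tensor fun l => (h1 l).le).2 fun l => ⟨h2 l, h3 l, h4 l⟩,
      fun l => ⟨h5 l, h6 l⟩, h7 k hk⟩

/-! ### Bisection keeps a mesh regular -/

theorem Dyad.halves {G : Finset ℕ} {a m b : ℕ} (h : Dyad G (a, b)) (hab : a < b)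
    (hm : a + b = 2 * m) : Dyad G (a, m) ∧ Dyad G (m, b) := by
  obtain ⟨u, hu, v, hv, huv, hc, hd⟩ := h
  exact ⟨⟨u, hu, v, hv, huv, hc, hd.tail ⟨m, hm, hab, Or.inl rfl⟩⟩,
    ⟨u, hu, v, hv, huv, hc, hd.tail ⟨m, hm, hab, Or.inr rfl⟩⟩⟩

theorem below_closure {d : ℕ} {q r lo hi : Fin d → ℕ} (hqr : ∀ k, q k ≤ r k)
    (h : ∀ k, lo k ≤ hi k) :
    (∀ k, box lo hi k ⊆ closure (box q r k)) ↔ ∀ k, q k ≤ lo k ∧ hi k ≤ r k := by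
  refine forall_congr' fun k => ?_
  rw [box, box, closure_comp (hqr k), comp_subset_Icc_iff (h k)]

/-- The entities split by a bisection of the cell `box q r` in direction `j`. -/
def InClosure {d : ℕ} (q r : Fin d → ℕ) (j : Fin d) (E : Box d) : Prop :=
  (∀ k, E k ⊆ closure (box q r k)) ∧ E j = comp (q j) (r j)

theorem inClosure_box {d : ℕ} {q r lo hi : Fin d → ℕ} {j : Fin d} (hqr : ∀ k, q k < r k)
    (h : ∀ k, lo k ≤ hi k) :
    InClosure q r j (box lo hi) ↔
      (∀ k, q k ≤ lo k ∧ hi k ≤ r k) ∧ lo j = q j ∧ hi j = r j := by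
  unfold InClosure
  rw [below_closure (fun k => (hqr k).le) h]
  refine and_congr Iff.rfl ⟨fun H => comp_inj (h j) (hqr j).le H, fun H => ?_⟩
  rw [box, H.1, H.2]

/-- Bisection preserves regularity. The case needing an argument is an unsplit entity meeting a
half of a split cell. Its `j`-th component lies in that of the split cell but is not all of it, so by the dyadic nesting alternative
it does not contain the midpoint in its interior and fits into one half. -/
theorem Regular.split {d : ℕ} {N : Fin d → ℕ} {M : Set (Box d)} {G : Fin d → Finset ℕ}
    (hM : Regular N M G) {q r : Fin d → ℕ} (hqr : ∀ k, q k < r k) (hQ : box q r ∈ M)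
    {j : Fin d} {m : ℕ} (hm : q j + r j = 2 * m) :
    Regular N (splitOn M j (q j) m (r j) (InClosure q r j)) G := by
  have hj := hqr j
  have ham : q j < m := by omega
  have hmb : m < r j := by omega
  have hP : ∀ E, InClosure q r j E → E j = comp (q j) (r j) := fun E h => h.2
  have mem : ∀ {lo hi : Fin d → ℕ} (h : ∀ k, lo k ≤ hi k), _ := fun {lo hi} h =>
    mem_splitOn (lo := lo) (hi := hi) hM.ent ham hmb hP h
  have hdQ : Dyad (G j) (q j, r j) := hM.dyad q r (fun k => (hqr k).le) hQ j hj
  -- the two halves of a split cell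
  have half : ∀ c e : Fin d → ℕ, (∀ k, c k < e k) → box c e ∈ M → InClosure q r j (box c e) →
      (box c (Function.update e j m) ∈ splitOn M j (q j) m (r j) (InClosure q r j)) ∧
      (box (Function.update c j m) e ∈ splitOn M j (q j) m (r j) (InClosure q r j)) := by
    intro c e hce hC hPC
    have hPC' := (inClosure_box hqr fun k => (hce k).le).1 hPC
    constructor
    · refine (mem fun k => ?_).2 (Or.inr ⟨c, e, fun k => (hce k).le, hC, hPC, hPC'.2.1, hPC'.2.2,
        fun k hk => by simp [hk], by simp [hPC'.2.1]⟩)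
      by_cases hk : k = j
      · subst hk; simp; omega
      · simpa [hk] using (hce k).le
    · refine (mem fun k => ?_).2 (Or.inr ⟨c, e, fun k => (hce k).le, hC, hPC, hPC'.2.1, hPC'.2.2,
        fun k hk => by simp [hk], by simp [hPC'.2.2]⟩)
      by_cases hk : k = j
      · subst hk; simp; omega
      · simpa [hk] using (hce k).le
  refine ⟨splitOn_entity hM.ent ham hmb hP, ?_, ?_, ?_⟩
  · intro lo hi h hE k hk
    rcases (mem h).1 hE with ⟨hE, -⟩ | ⟨l, u, hlu, hF, hPF, h1, h2, h3, h4⟩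
    · exact hM.dyad lo hi h hE k hk
    · by_cases hkj : k = j
      · subst hkj
        have hh := hdQ.halves hj hm
        rcases h4 with h4 | h4 | h4
        · rw [h4.1, h4.2]; exact hh.1
        · omega
        · rw [h4.1, h4.2]; exact hh.2
      · rw [(h3 k hkj).1, (h3 k hkj).2]
        exact hM.dyad l u hlu hF k (by have := h3 k hkj; omega)
  · intro lo hi c e h hce hE hC hmeet
    -- parents `l, u` of the entity and `c', e'` of the cell
    obtain ⟨l, u, hlu, hF, hoff, hE'⟩ : ∃ l u : Fin d → ℕ, (∀ k, l k ≤ u k) ∧ box l u ∈ M ∧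
        (∀ k, k ≠ j → lo k = l k ∧ hi k = u k) ∧
        ((¬ InClosure q r j (box l u) ∧ lo j = l j ∧ hi j = u j) ∨
          (InClosure q r j (box l u) ∧ l j = q j ∧ u j = r j ∧
          ((lo j = q j ∧ hi j = m) ∨ (lo j = m ∧ hi j = m) ∨ (lo j = m ∧ hi j = r j)))) := by
      rcases (mem h).1 hE with ⟨hE, hn⟩ | ⟨l, u, hlu, hF, hPF, h1, h2, h3, h4⟩
      · exact ⟨lo, hi, h, hE, fun _ _ => ⟨rfl, rfl⟩, Or.inl ⟨hn, rfl, rfl⟩⟩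
      · exact ⟨l, u, hlu, hF, h3, Or.inr ⟨hPF, h1, h2, h4⟩⟩
    obtain ⟨c', e', hce', hC0, hoffC, hC'⟩ : ∃ c' e' : Fin d → ℕ, (∀ k, c' k < e' k) ∧
        box c' e' ∈ M ∧ (∀ k, k ≠ j → c k = c' k ∧ e k = e' k) ∧
        ((¬ InClosure q r j (box c' e') ∧ c j = c' j ∧ e j = e' j) ∨
          (InClosure q r j (box c' e') ∧ c' j = q j ∧ e' j = r j ∧
          ((c j = q j ∧ e j = m) ∨ (c j = m ∧ e j = r j)))) := by
      rcases (mem fun k => (hce k).le).1 hC with ⟨hE, hn⟩ | ⟨l, u, hlu, hF, hPF, h1, h2, h3, h4⟩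
      · exact ⟨c, e, hce, hE, fun _ _ => ⟨rfl, rfl⟩, Or.inl ⟨hn, rfl, rfl⟩⟩
      · refine ⟨l, u, fun k => ?_, hF, h3, Or.inr ⟨hPF, h1, h2, ?_⟩⟩
        · by_cases hk : k = j
          · subst hk; omega
          · have := h3 k hk; have := hce k; omega
        · have := hce j; omega
    have hmj := hmeet j
    have hmeet' : ∀ k, Meets (l k) (u k) (c' k) (e' k) := by
      intro k
      by_cases hk : k = j
      · subst hk; unfold Meets at *; omega
      · have := hmeet k; rwa [(hoff k hk).1, (hoff k hk).2, (hoffC k hk).1, (hoffC k hk).2] at this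
    have hfit := hM.fits l u c' e' hlu hce' hF hC0 hmeet'
    intro k
    by_cases hk : k = j
    swap
    · rw [(hoff k hk).1, (hoff k hk).2, (hoffC k hk).1, (hoffC k hk).2]; exact hfit k
    subst hk
    have hfk := hfit k
    have hluk := hlu k
    rcases hC' with ⟨hnC, h1, h2⟩ | ⟨hpC, h1, h2, h3⟩
    · omega
    · rcases hE' with ⟨hnE, h4, h5⟩ | ⟨hpE, h4, h5, h6⟩
      · -- an unsplit entity in the closure of a split cell: its component is not the full one
        have hne : ¬ (l k = q k ∧ u k = r k) := by
          intro hlq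
          apply hnE
          rw [inClosure_box hqr hlu]
          refine ⟨fun i => ?_, hlq⟩
          have h7 := ((inClosure_box hqr fun k => (hce' k).le).1 hpC).1 i
          have h8 := hfit i
          omega
        rcases hluk.eq_or_lt with hs | hs
        · unfold Meets at *; omega
        · have hD := (hM.dyad l u hlu hF k hs).dyRel hdQ
          simp only [DyRel] at hD
          unfold Meets at *
          omega
      · unfold Meets at *; omega
  · intro lo hi h hE k hk
    rcases (mem h).1 hE with ⟨hE, hn⟩ | ⟨l, u, hlu, hF, hPF, h1, h2, h3, h4⟩
    · obtain ⟨c, e, hce, hC, hfit, hend⟩ := hM.wit lo hi h hE k hk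
      by_cases hpC : InClosure q r j (box c e)
      · have hpC' := (inClosure_box hqr fun k => (hce k).le).1 hpC
        have hne : ¬ (lo j = q j ∧ hi j = r j) := by
          intro hlq
          apply hn
          rw [inClosure_box hqr h]
          refine ⟨fun i => ?_, hlq⟩
          have h7 := hpC'.1 i
          have h8 := hfit i
          omega
        have hfj := hfit j
        have hlj := h j
        have hside : hi j ≤ m ∧ (k = j → c k = lo k) ∨ m ≤ lo j ∧ (k = j → e k = lo k) := by
          by_cases hkj : k = j
          · subst hkj; omega
          · rcases hlj.eq_or_lt with hs | hs
            · simp only [hkj, false_imp_iff, and_true]; omega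
            · have hD := (hM.dyad lo hi h hE j hs).dyRel hdQ
              simp only [DyRel] at hD
              simp only [hkj, false_imp_iff, and_true]
              omega
        rcases hside with ⟨hs, hs'⟩ | ⟨hs, hs'⟩
        · refine ⟨c, Function.update e j m, fun i => ?_, (half c e hce hC hpC).1, fun i => ?_, ?_⟩
          · by_cases hi : i = j
            · subst hi; simp; omega
            · simpa [hi] using hce i
          · by_cases hi : i = j
            · subst hi; simp; omega
            · simpa [hi] using hfit i
          · by_cases hkj : k = j
            · exact Or.inl (hs' hkj)
            · simpa [hkj] using hend
        · refine ⟨Function.update c j m, e, fun i => ?_, (half c e hce hC hpC).2, fun i => ?_, ?_⟩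
          · by_cases hi : i = j
            · subst hi; simp; omega
            · simpa [hi] using hce i
          · by_cases hi : i = j
            · subst hi; simp; omega
            · simpa [hi] using hfit i
          · by_cases hkj : k = j
            · exact Or.inr (hs' hkj)
            · simpa [hkj] using hend
      · exact ⟨c, e, hce, (mem fun k => (hce k).le).2 (Or.inl ⟨hC, hpC⟩), hfit, hend⟩
    · have hPF' := (inClosure_box hqr hlu).1 hPF
      have hPQ : InClosure q r j (box q r) :=
        (inClosure_box hqr fun k => (hqr k).le).2 ⟨fun k => ⟨le_rfl, le_rfl⟩, rfl, rfl⟩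
      by_cases hkj : k = j
      · subst hkj
        refine ⟨q, Function.update r k m, fun i => ?_, (half q r hqr hQ hPQ).1, fun i => ?_, ?_⟩
        · by_cases hi : i = k
          · subst hi; simp; omega
          · simpa [hi] using hqr i
        · by_cases hi : i = k
          · subst hi; simp; omega
          · have := hPF'.1 i; have := h3 i hi; simp [hi]; omega
        · simp; omega
      · have h3k := h3 k hkj
        obtain ⟨c, e, hce, hC, hfit, hend⟩ := hM.wit l u hlu hF k (by omega)
        by_cases hpC : InClosure q r j (box c e)
        · have hpC' := (inClosure_box hqr fun k => (hce k).le).1 hpC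
          have hs : hi j ≤ m ∨ m ≤ lo j := by omega
          rcases hs with hs | hs
          · refine ⟨c, Function.update e j m, fun i => ?_, (half c e hce hC hpC).1, fun i => ?_, ?_⟩
            · by_cases hi : i = j
              · subst hi; simp; omega
              · simpa [hi] using hce i
            · by_cases hi : i = j
              · subst hi; simp; omega
              · have := hfit i; have := h3 i hi; simp [hi]; omega
            · simp [hkj]; omega
          · refine ⟨Function.update c j m, e, fun i => ?_, (half c e hce hC hpC).2, fun i => ?_, ?_⟩
            · by_cases hi : i = j
              · subst hi; simp; omega
              · simpa [hi] using hce i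
            · by_cases hi : i = j
              · subst hi; simp; omega
              · have := hfit i; have := h3 i hi; simp [hi]; omega
            · simp [hkj]; omega
        · refine ⟨c, e, hce, (mem fun k => (hce k).le).2 (Or.inl ⟨hC, hpC⟩), fun i => ?_, by omega⟩
          have := hfit i
          by_cases hi : i = j
          · subst hi; omega
          · have := h3 i hi; omega

theorem bisectStep_box {d : ℕ} {N : Fin d → ℕ} {M M' : Set (Box d)}
    (h : BisectStep N M M') : ∃ (q r : Fin d → ℕ) (j : Fin d) (m : ℕ), (∀ k, q k < r k) ∧
      box q r ∈ M ∧ q j + r j = 2 * m ∧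
      M' = splitOn M j (q j) m (r j) (InClosure q r j) := by
  obtain ⟨Q, hQ, j, a, b, m, hI, hQj, hm, hM'⟩ := h
  choose q r h1 h2 h3 using hI
  have hQe : Q = box q r := by
    funext k; rw [h3 k, box, comp_of_lt (h1 k)]
  subst hQe
  have hab : a < b := by
    have hne : (box q r j).Nonempty := comp_nonempty (h1 j).le
    rw [hQj, Set.nonempty_Ioo] at hne
    exact_mod_cast hne
  rw [← comp_of_lt hab] at hQj
  obtain ⟨rfl, rfl⟩ := comp_inj (h1 j).le hab.le hQj
  refine ⟨q, r, j, m, h1, hQ, hm, ?_⟩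
  rw [hM', midSplit_eq _ _ _ _ (by omega) (by omega) hQj]
  rfl

/-- Every T-mesh is regular, by induction along its construction. -/
theorem TMesh.regular {d : ℕ} {N : Fin d → ℕ} (hN : ∀ k, 0 < N k) (T : TMesh d N) :
    ∃ G, Regular N T.entities G := by
  obtain ⟨M₀, ⟨G, hG, rfl⟩, hr⟩ := T.constructed
  refine ⟨G, ?_⟩
  generalize T.entities = M at hr ⊢
  induction hr with
  | refl => exact Regular.tensor hN hG
  | tail _ hs ih =>
    obtain ⟨q, r, j, m, hqr, hQ, hm, rfl⟩ := bisectStep_box hs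
    exact ih.split hqr hQ hm

/-! ### Geometry of cells, and non-conforming frame slices as T-junctions -/

theorem TMesh.exists_box_mem {d : ℕ} {N : Fin d → ℕ} (T : TMesh d N) {x : Fin d → ℝ}
    (hx : x ∈ domain N) : ∃ lo hi : Fin d → ℕ, (∀ k, lo k ≤ hi k) ∧ box lo hi ∈ T.entities ∧
      ∀ k, x k ∈ comp (lo k) (hi k) := by
  rw [← T.union_eq] at hx
  simp only [Set.mem_iUnion, exists_prop] at hx
  obtain ⟨E, hE, hxE⟩ := hx
  obtain ⟨lo, hi, h, -, rfl⟩ := exists_box (T.mem_entity E hE)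
  exact ⟨lo, hi, h, hE, mem_toSet_box.1 hxE⟩

theorem TMesh.eq_of_mem {d : ℕ} {N : Fin d → ℕ} (T : TMesh d N) {x : Fin d → ℝ} {E F : Box d}
    (hE : E ∈ T.entities) (hF : F ∈ T.entities) (hxE : x ∈ toSet E) (hxF : x ∈ toSet F) :
    E = F := by
  by_contra h
  have := T.pairwise_disjoint E hE F hF h
  exact (this ▸ (⟨hxE, hxF⟩ : x ∈ toSet E ∩ toSet F) : x ∈ (∅ : Set (Fin d → ℝ)))

theorem TMesh.box_eq_of_mem {d : ℕ} {N : Fin d → ℕ} (T : TMesh d N) {x : Fin d → ℝ}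
    {lo hi c e : Fin d → ℕ} (h : ∀ k, lo k ≤ hi k) (h' : ∀ k, c k ≤ e k)
    (hE : box lo hi ∈ T.entities) (hF : box c e ∈ T.entities)
    (hxE : ∀ k, x k ∈ comp (lo k) (hi k)) (hxF : ∀ k, x k ∈ comp (c k) (e k)) :
    lo = c ∧ hi = e :=
  box_inj h h' (T.eq_of_mem hE hF (mem_toSet_box.2 hxE) (mem_toSet_box.2 hxF))

theorem mem_Hdim_self {d : ℕ} {N : Fin d → ℕ} (T : TMesh d N) {c e : Fin d → ℕ}
    (h : ∀ k, c k ≤ e k) : box c e ∈ Hdim T d ↔ box c e ∈ T.entities ∧ ∀ k, c k < e k := by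
  unfold Hdim
  refine and_congr Iff.rfl ?_
  rw [singDirs_box h, Nat.sub_self, Set.ncard_eq_zero (Set.toFinite _),
    Set.eq_empty_iff_forall_notMem]
  exact forall_congr' fun k => ⟨fun h1 => lt_of_le_of_ne (h k) h1, fun h1 => h1.ne⟩

theorem half_mem_comp {a b n : ℕ} (h1 : a ≤ n) (h2 : n < b) : (n : ℝ) + 1 / 2 ∈ comp a b := by
  rw [comp_of_lt (h1.trans_lt h2)]
  have h3 : (a : ℝ) ≤ n := by exact_mod_cast h1
  have h4 : (n : ℝ) + 1 ≤ b := by exact_mod_cast h2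
  constructor <;> linarith

theorem of_half_mem_Icc {a b n : ℕ} (h : (n : ℝ) + 1 / 2 ∈ Set.Icc (a : ℝ) b) :
    a ≤ n ∧ n < b := by
  obtain ⟨h1, h2⟩ := h
  constructor
  · have : (a : ℝ) < n + 1 := by linarith
    have : a < n + 1 := by exact_mod_cast this
    omega
  · have : (n : ℝ) < b := by linarith
    exact_mod_cast this

theorem nat_mem_comp {a b n : ℕ} : (n : ℝ) ∈ comp a b ↔ (a = b ∧ n = a) ∨ (a < n ∧ n < b) := by
  rw [mem_comp]
  norm_cast
  omega

theorem meets_of_mem {p q a b : ℕ} {x : ℝ} (hpq : p ≤ q) (h : x ∈ comp p q)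
    (hxab : x ∈ Set.Icc (a : ℝ) b) : Meets p q a b := by
  rcases mem_comp.1 h with ⟨h1, rfl⟩ | ⟨h1, h2, h3⟩
  · left
    obtain ⟨h4, h5⟩ := hxab
    exact ⟨h1, by exact_mod_cast h4, by exact_mod_cast h5⟩
  · right
    refine ⟨by omega, ?_, ?_⟩
    · exact_mod_cast hxab.1.trans_lt h3
    · exact_mod_cast h2.trans_le hxab.2

/-- If the slice `S_k(n)` lies in the skeleton, no cell has `n` inside its `k`-th component: a
hyperface through a point of an open cell would meet that cell. -/
theorem no_cross {d : ℕ} {N : Fin d → ℕ} (T : TMesh d N) {k : Fin d} {n : ℕ}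
    (hs : slice N k n ⊆ skel T k) {c e : Fin d → ℕ} (hce : ∀ k, c k < e k)
    (hC : box c e ∈ T.entities) : ¬ (c k < n ∧ n < e k) := by
  rintro ⟨h1, h2⟩
  have hN := hi_le (fun k => (hce k).le) (T.mem_entity _ hC)
  let x : Fin d → ℝ := fun m => if m = k then (n : ℝ) else (c m : ℝ) + 1 / 2
  have hxC : x ∈ toSet (box c e) := by
    rw [mem_toSet_box]
    intro m
    by_cases hm : m = k
    · subst hm
      simp only [x, if_true]
      rw [nat_mem_comp]; omega
    · simp only [x, hm, if_false]
      exact half_mem_comp le_rfl (hce m)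
  have hxd : x ∈ domain N := T.union_eq ▸ Set.mem_biUnion hC hxC
  have hxs := hs ⟨hxd, by simp [x]⟩
  simp only [skel, Set.mem_iUnion] at hxs
  obtain ⟨F, ⟨hF, r, hr⟩, hxF⟩ := hxs
  have hop : IsOpen (toSet (box c e)) := by
    refine isOpen_set_pi Set.finite_univ fun m _ => ?_
    rw [box, comp_of_lt (hce m)]
    exact isOpen_Ioo
  obtain ⟨y, hyC, hyF⟩ := mem_closure_iff.1 hxF _ hop hxC
  have hEq := T.eq_of_mem hC hF.1 hyC hyF
  rw [← hEq] at hr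
  have := (comp_singleton (hce k).le).1 ⟨r, hr⟩
  have := hce k
  omega

/-- Two cells touch a frame slice `S_k(n)` at a common point, and an endpoint `r` of the
`l`-component of the second is interior to the `l`-component of the first. Then the entity in
`x_k = n`, `x_l = r` is a T-junction with orthogonal direction `l` and pointing direction `k`: one of
the four hyperfaces around it is missing, as it would cut through the first cell. This contradicts
admissibility. -/
theorem no_TJ {d : ℕ} {N p : Fin d → ℕ} (T : TMesh d N) {G : Fin d → Finset ℕ}
    (hR : Regular N T.entities G) (hadm : Admissible p T) {k l : Fin d} (hkl : l ≠ k) {n r : ℕ}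
    (hn : 0 < n ∧ n < N k ∧ (n ≤ halfdeg p k ∨ N k ≤ n + halfdeg p k))
    {c e c' e' : Fin d → ℕ} (hce : ∀ m, c m < e m) (hce' : ∀ m, c' m < e' m)
    (hC : box c e ∈ T.entities) (hC' : box c' e' ∈ T.entities)
    (h1 : n = c k ∨ n = e k) (h2 : c' k ≤ n ∧ n ≤ e' k) (h3 : c l < r ∧ r < e l)
    (h4 : r = c' l ∨ r = e' l)
    (h5 : ∀ m, m ≠ k → m ≠ l → c m < e' m ∧ c' m < e m) : False := by
  have hle := fun m => (hce m).le
  have hle' := fun m => (hce' m).le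
  have hCN := hi_le hle (T.mem_entity _ hC)
  let z : Fin d → ℕ := fun m => max (c m) (c' m)
  let x : Fin d → ℝ := fun m => if m = k then (n : ℝ) else if m = l then (r : ℝ) else
    (z m : ℝ) + 1 / 2
  have hxk : x k = n := by simp [x]
  have hxl : x l = r := by simp [x, hkl]
  have hxm : ∀ m, m ≠ k → m ≠ l → x m = (z m : ℝ) + 1 / 2 := fun m hm hm' => by simp [x, hm, hm']
  have hz : ∀ m, m ≠ k → m ≠ l → c m ≤ z m ∧ z m < e m ∧ c' m ≤ z m ∧ z m < e' m := by
    intro m hm hm'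
    have := h5 m hm hm'; have := hce m; have := hce' m
    simp only [z]; omega
  have cases3 : ∀ {P : Fin d → Prop}, P k → P l → (∀ m, m ≠ k → m ≠ l → P m) → ∀ m, P m := by
    intro P hk hl hm m
    by_cases h : m = k
    · exact h ▸ hk
    · by_cases h' : m = l
      · exact h' ▸ hl
      · exact hm m h h'
  have hxC : ∀ m, x m ∈ Set.Icc (c m : ℝ) (e m) := by
    apply cases3
    · rw [hxk]; have := hce k; constructor <;> norm_cast <;> omega
    · rw [hxl]; constructor <;> norm_cast <;> omega
    · intro m hm hm'
      rw [hxm m hm hm']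
      exact comp_subset_Icc (hle m) (half_mem_comp (hz m hm hm').1 (hz m hm hm').2.1)
  have hxC' : ∀ m, x m ∈ Set.Icc (c' m : ℝ) (e' m) := by
    apply cases3
    · rw [hxk]; constructor <;> norm_cast <;> omega
    · rw [hxl]; have := hce' l; constructor <;> norm_cast <;> omega
    · intro m hm hm'
      rw [hxm m hm hm']
      exact comp_subset_Icc (hle' m) (half_mem_comp (hz m hm hm').2.2.1 (hz m hm hm').2.2.2)
  have hxint : ∀ m, x m ∈ Set.Ioo (0 : ℝ) (N m) := by
    apply cases3
    · rw [hxk]; constructor <;> norm_cast <;> omega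
    · rw [hxl]; have := hCN l; constructor <;> norm_cast <;> omega
    · intro m hm hm'
      have h6 := hz m hm hm'
      have h7 := hCN m
      have := half_mem_comp (Nat.zero_le (z m)) (h6.2.1.trans_le h7)
      rw [comp_of_lt (by omega)] at this
      rw [hxm m hm hm']
      simpa using this
  have hxd : x ∈ domain N := fun m _ => Set.Ioo_subset_Icc_self (hxint m)
  obtain ⟨lo, hi, hlh, hJ, hxJ⟩ := T.exists_box_mem hxd
  have hf := hR.fits lo hi c e hlh hce hJ hC fun m => meets_of_mem (hlh m) (hxJ m) (hxC m)
  have hf' := hR.fits lo hi c' e' hlh hce' hJ hC' fun m => meets_of_mem (hlh m) (hxJ m) (hxC' m)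
  have hJk : lo k = n ∧ hi k = n := by
    have := hxJ k; rw [hxk, nat_mem_comp] at this
    have := hf k; omega
  have hJl : lo l = r ∧ hi l = r := by
    have := hxJ l; rw [hxl, nat_mem_comp] at this
    have := hf' l; omega
  have hJm : ∀ m, m ≠ k → m ≠ l → lo m < hi m := by
    intro m hm hm'
    have := of_half_mem_Icc (hxm m hm hm' ▸ comp_subset_Icc (hlh m) (hxJ m))
    omega
  have hsing : singDirs (box lo hi) = {k, l} := by
    rw [singDirs_box hlh]
    ext m
    simp only [Set.mem_ofPred_eq, Set.mem_insert_iff, Set.mem_singleton_iff]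
    constructor
    · intro h
      by_contra! hcon
      exact (hJm m hcon.1 hcon.2).ne h
    · rintro (rfl | rfl) <;> omega
  have hd : 2 ≤ d := by
    have := k.2; have := l.2
    have : (l : ℕ) ≠ k := fun h => hkl (Fin.ext h)
    omega
  have hxJ' : x ∈ toSet (box lo hi) := mem_toSet_box.2 hxJ
  -- the hyperfaces around `x` contain one of three points
  have hval : valence T (box lo hi) < 4 := by
    classical
    let δ : ℝ := if n = c k then -(1/2) else 1/2
    let y₁ : Fin d → ℝ := Function.update x k (n + δ)
    let y₂ : Fin d → ℝ := Function.update x l (r - 1/2)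
    let y₃ : Fin d → ℝ := Function.update x l (r + 1/2)
    let g : (Fin d → ℝ) → Box d := fun y =>
      if h : ∃ E ∈ T.entities, y ∈ toSet E then h.choose else fun _ => ∅
    have hg : ∀ y E, E ∈ T.entities → y ∈ toSet E → g y = E := by
      intro y E hE hy
      have h : ∃ E ∈ T.entities, y ∈ toSet E := ⟨E, hE, hy⟩
      simp only [g, h, dif_pos]
      exact T.eq_of_mem h.choose_spec.1 hE h.choose_spec.2 hy
    have hsub : {F ∈ Hdim T (d - 1) | toSet (box lo hi) ⊆ frontier (toSet F)} ⊆
        g '' (({y₁, y₂, y₃} : Finset (Fin d → ℝ)) : Set (Fin d → ℝ)) := by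
      rintro F ⟨⟨hF, hcard⟩, hJF⟩
      obtain ⟨s, t, hst, -, rfl⟩ := exists_box (T.mem_entity F hF)
      have hxF := frontier_subset_closure (hJF hxJ')
      rw [closure_toSet_box hst] at hxF
      have hxF : ∀ m, x m ∈ Set.Icc (s m : ℝ) (t m) := fun m => hxF m trivial
      have hFm : ∀ m, m ≠ k → m ≠ l → s m ≤ z m ∧ z m < t m := fun m hm hm' =>
        of_half_mem_Icc (hxm m hm hm' ▸ hxF m)
      have hFk : s k ≤ n ∧ n ≤ t k := by
        have := hxF k; rw [hxk] at this
        exact ⟨by exact_mod_cast this.1, by exact_mod_cast this.2⟩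
      have hFl : s l ≤ r ∧ r ≤ t l := by
        have := hxF l; rw [hxl] at this
        exact ⟨by exact_mod_cast this.1, by exact_mod_cast this.2⟩
      rw [singDirs_box hst, show d - (d - 1) = 1 by omega, Set.ncard_eq_one] at hcard
      obtain ⟨i, hi⟩ := hcard
      have hi' : ∀ m, s m = t m ↔ m = i := fun m => by
        have := Set.ext_iff.1 hi m; simpa using this
      have hmemm : ∀ m, m ≠ k → m ≠ l → x m ∈ comp (s m) (t m) := fun m hm hm' => by
        rw [hxm m hm hm']; exact half_mem_comp (hFm m hm hm').1 (hFm m hm hm').2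
      have hikl : i = k ∨ i = l := by
        by_contra! hcon
        have := (hi' i).2 rfl
        have := hFm i hcon.1 hcon.2
        omega
      rcases hikl with rfl | rfl
      · -- `F` is orthogonal to the slice direction
        have hk := (hi' i).2 rfl
        have hl : s l < t l := lt_of_le_of_ne (hst l) fun h => hkl ((hi' l).1 h)
        have hik : x i ∈ comp (s i) (t i) := by rw [hxk, nat_mem_comp]; omega
        by_cases hr : r < t l
        · refine ⟨y₃, by simp, hg _ _ hF (mem_toSet_box.2 (cases3 ?_ ?_ ?_))⟩
          · simpa [y₃, hkl.symm] using hik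
          · simp only [y₃, Function.update_self]; exact half_mem_comp hFl.1 hr
          · intro m hm hm'; simpa [y₃, hm'] using hmemm m hm hm'
        · refine ⟨y₂, by simp, hg _ _ hF (mem_toSet_box.2 (cases3 ?_ ?_ ?_))⟩
          · simpa [y₂, hkl.symm] using hik
          · simp only [y₂, Function.update_self]
            have hr1 : ((r - 1 : ℕ) : ℝ) = r - 1 := by
              rw [Nat.cast_sub (by omega)]; simp
            have := half_mem_comp (a := s l) (b := t l) (n := r - 1) (by omega) (by omega)
            rw [hr1] at this
            convert this using 1; ring
          · intro m hm hm'; simpa [y₂, hm'] using hmemm m hm hm'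
      · have hl := (hi' i).2 rfl
        have hk : s k < t k := lt_of_le_of_ne (hst k) fun h => hkl ((hi' k).1 h).symm
        have hil : x i ∈ comp (s i) (t i) := by rw [hxl, nat_mem_comp]; omega
        have hilC : x i ∈ comp (c i) (e i) := by rw [hxl, nat_mem_comp]; omega
        -- a hyperface on the side of the cell `box c e` would meet that cell
        have hside : ∀ u : ℕ, c k ≤ u → u < e k → s k ≤ u → u < t k → False := by
          intro u hu1 hu2 hu3 hu4
          have := T.box_eq_of_mem (x := Function.update x k (u + 1/2)) hst hle hF hC
            (cases3 (by simpa using half_mem_comp hu3 hu4) (by simpa [hkl] using hil)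
              fun m hm hm' => by simpa [hm] using hmemm m hm hm')
            (cases3 (by simpa using half_mem_comp hu1 hu2) (by simpa [hkl] using hilC)
              fun m hm hm' => by
                simpa [hm, hxm m hm hm'] using half_mem_comp (hz m hm hm').1 (hz m hm hm').2.1)
          have h7 := hce i
          rw [← this.1, ← this.2] at h7
          omega
        refine ⟨y₁, by simp, hg _ _ hF (mem_toSet_box.2 (cases3 ?_ ?_ ?_))⟩
        · simp only [y₁, Function.update_self, δ]
          have hcek := hce k
          split_ifs with hnc
          · have hnt : ¬ n < t k := fun h => hside n (by omega) (by omega) (by omega) h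
            have hn1 : ((n - 1 : ℕ) : ℝ) = n - 1 := by
              rw [Nat.cast_sub (by omega)]; simp
            have := half_mem_comp (a := s k) (b := t k) (n := n - 1) (by omega) (by omega)
            rw [hn1] at this
            convert this using 1; ring
          · have hns : ¬ s k < n := fun h =>
              hside (n - 1) (by omega) (by omega) (by omega) (by omega)
            exact half_mem_comp (by omega) (by omega)
        · simpa [y₁, hkl] using hil
        · intro m hm hm'; simpa [y₁, hm] using hmemm m hm hm'
    calc valence T (box lo hi) ≤
          (g '' (({y₁, y₂, y₃} : Finset (Fin d → ℝ)) : Set (Fin d → ℝ))).ncard :=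
        Set.ncard_le_ncard hsub ((Finset.finite_toSet _).image g)
      _ ≤ _ := Set.ncard_image_le (Finset.finite_toSet _)
      _ ≤ 3 := by rw [Set.ncard_coe_finset]; exact Finset.card_le_three
      _ < 4 := by norm_num
  have hTJ : IsTJunction T (box lo hi) := by
    refine ⟨⟨hJ, ?_⟩, fun hb => ?_, hval⟩
    · rw [hsing, Set.ncard_pair hkl.symm]; omega
    · refine (hb hxJ').2 ?_
      rw [domain, interior_pi_set Set.finite_univ]
      intro m _
      change x m ∈ interior (Set.Icc (0 : ℝ) (N m))
      rw [interior_Icc]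
      exact hxint m
  have hfrk : frontier (box c e k) = {(c k : ℝ), (e k : ℝ)} := by
    rw [box, comp_of_lt (hce k)]; exact frontier_Ioo (by exact_mod_cast hce k)
  have hcl : closure (toSet (box lo hi)) ⊆ closure (toSet (box c e)) := by
    rw [closure_toSet_box hlh, closure_toSet_box hle]
    refine Set.pi_mono fun m _ => Set.Icc_subset_Icc ?_ ?_
    · exact_mod_cast (hf m).1
    · exact_mod_cast (hf m).2
  have hdata : TJData T (box lo hi) (box c e) l k := by
    refine ⟨(mem_Hdim_self T hle).2 ⟨hC, hce⟩, ?_, ?_, hkl, ⟨r, ?_⟩, ⟨n, ?_⟩, ?_, ?_, ?_⟩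
    · intro y hy
      refine ⟨hcl (subset_closure hy), fun hy' => ?_⟩
      have h6 := mem_toSet_box.1 (interior_subset hy') k
      have h7 := mem_toSet_box.1 hy k
      rw [hJk.1, hJk.2, comp_self] at h7
      rw [h7, nat_mem_comp] at h6
      have := hce k
      omega
    · rw [closure_toSet_box hlh]
      refine Set.eq_empty_iff_forall_notMem.2 ?_
      rintro y ⟨hy, hy'⟩
      have h6 := hy l trivial
      have h7 := hy' l trivial
      simp only [hJl.1, hJl.2, Set.Icc_self, Set.mem_singleton_iff] at h6
      simp only [box, comp_of_lt (hce l)] at h7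
      rw [frontier_Ioo (by exact_mod_cast hce l), h6] at h7
      rcases h7 with h7 | h7
      · have : r = c l := by exact_mod_cast h7
        omega
      · have : r = e l := by exact_mod_cast Set.mem_singleton_iff.1 h7
        omega
    · simp [box, hJl, comp_self]
    · simp [box, hJk, comp_self]
    · simp only [box, hJl, comp_self, Set.singleton_subset_iff]
      rw [nat_mem_comp]; omega
    · intro h
      have := comp_inj (hlh l) (hle l) h
      omega
    · rw [hfrk]
      simp only [box, hJk, comp_self, Set.singleton_subset_iff]
      rcases h1 with h1 | h1 <;> simp [← h1]
  refine hadm.1 k _ _ l k hTJ hdata (Or.inr rfl) fun y hy => ⟨?_, ?_⟩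
  · rw [← T.union_eq]; exact Set.mem_biUnion hJ hy
  · have h7 := mem_toSet_box.1 hy k
    rw [hJk.1, hJk.2, comp_self] at h7
    rw [h7]
    rcases hn with ⟨hn0, hnN, hn | hn⟩
    · left; constructor
      · positivity
      · exact_mod_cast hn
    · right
      have : (N k : ℝ) ≤ n + halfdeg p k := by exact_mod_cast hn
      constructor
      · linarith
      · exact_mod_cast hnN.le

/-! ### Conforming frame slices and the columns above a cell -/

/-- `n` is the index of a slice orthogonal to `k` inside the frame region `FR^(k)`. -/
def FrameIdx {d : ℕ} (N p : Fin d → ℕ) (k : Fin d) (n : ℕ) : Prop :=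
  n ≤ N k ∧ (n ≤ halfdeg p k ∨ N k ≤ n + halfdeg p k)

/-- No cell of `M` is crossed by a frame slice. -/
def NoCross {d : ℕ} (N p : Fin d → ℕ) (M : Set (Box d)) : Prop :=
  ∀ k n, FrameIdx N p k n → ∀ c e : Fin d → ℕ, (∀ m, c m < e m) → box c e ∈ M →
    ¬ (c k < n ∧ n < e k)

/-- `M` is conforming across interior frame slices: cells on opposite sides of such a slice that
share a piece of it with nonempty relative interior have the same cross-section. -/
def Matched {d : ℕ} (N p : Fin d → ℕ) (M : Set (Box d)) : Prop :=
  ∀ k n, FrameIdx N p k n → 0 < n → n < N k → ∀ c e c' e' : Fin d → ℕ, (∀ m, c m < e m) →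
    (∀ m, c' m < e' m) → box c e ∈ M → box c' e' ∈ M → e k = n → c' k = n →
    (∀ m, m ≠ k → c m < e' m ∧ c' m < e m) → ∀ m, m ≠ k → c m = c' m ∧ e m = e' m

theorem noCross_of_slices {d : ℕ} {N p : Fin d → ℕ} (T : TMesh d N)
    (h : ∀ k : Fin d, ∀ n : ℕ, (n ≤ halfdeg p k ∨ (N k - halfdeg p k ≤ n ∧ n ≤ N k)) →
      slice N k n ⊆ skel T k) : NoCross N p T.entities :=
  fun k n hn _ _ hce hC => no_cross T (h k n (by unfold FrameIdx at hn; omega)) hce hC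

theorem matched_of_admissible {d : ℕ} {N p : Fin d → ℕ} (T : TMesh d N) {G : Fin d → Finset ℕ}
    (hR : Regular N T.entities G) (hadm : Admissible p T) : Matched N p T.entities := by
  intro k n hn hn0 hnN c e c' e' hce hce' hC hC' hk hk' hint l hl
  have hn' : 0 < n ∧ n < N k ∧ (n ≤ halfdeg p k ∨ N k ≤ n + halfdeg p k) := ⟨hn0, hnN, hn.2⟩
  have h1 := hce k
  have h2 := hce' k
  have h3 := hint l hl
  by_contra hcon
  -- an endpoint of one component lies strictly inside the other
  have hcase : (c l < c' l ∧ c' l < e l) ∨ (c l < e' l ∧ e' l < e l) ∨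
      (c' l < c l ∧ c l < e' l) ∨ (c' l < e l ∧ e l < e' l) := by omega
  have hint' : ∀ m, m ≠ k → m ≠ l → c m < e' m ∧ c' m < e m := fun m hm _ => hint m hm
  have hint'' : ∀ m, m ≠ k → m ≠ l → c' m < e m ∧ c m < e' m := fun m hm _ => (hint m hm).symm
  rcases hcase with h | h | h | h
  · exact no_TJ T hR hadm hl hn' hce hce' hC hC' (by omega) (by omega) h (by omega) hint'
  · exact no_TJ T hR hadm hl hn' hce hce' hC hC' (by omega) (by omega) h (by omega) hint'
  · exact no_TJ T hR hadm hl hn' hce' hce hC' hC (by omega) (by omega) h (by omega) hint''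
  · exact no_TJ T hR hadm hl hn' hce' hce hC' hC (by omega) (by omega) h (by omega) hint''

theorem TMesh.exists_cell {d : ℕ} {N : Fin d → ℕ} (T : TMesh d N) (w : Fin d → ℕ)
    (hw : ∀ m, w m < N m) : ∃ lo hi : Fin d → ℕ, box lo hi ∈ T.entities ∧
      ∀ m, lo m ≤ w m ∧ w m < hi m := by
  obtain ⟨lo, hi, h, hE, hx⟩ := T.exists_box_mem (x := fun m => (w m : ℝ) + 1 / 2) (fun m _ => by
    have := comp_subset_Icc (Nat.zero_le _) (half_mem_comp (Nat.zero_le (w m)) (hw m))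
    simpa using this)
  exact ⟨lo, hi, hE, fun m => of_half_mem_Icc (comp_subset_Icc (h m) (hx m))⟩

/-- Below a cell whose lower `k`-face lies in the lower frame sits the cell with the same
cross-section and unit height. -/
theorem neighbor_down {d : ℕ} {N p : Fin d → ℕ} (T : TMesh d N) (hnc : NoCross N p T.entities)
    (hmt : Matched N p T.entities) {c e : Fin d → ℕ} (hce : ∀ m, c m < e m)
    (hC : box c e ∈ T.entities) {k : Fin d} (h0 : 0 < c k) (hh : c k ≤ halfdeg p k) :
    box (Function.update c k (c k - 1)) (Function.update e k (c k)) ∈ T.entities := by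
  have hN := hi_le (fun m => (hce m).le) (T.mem_entity _ hC)
  have hNk := hN k
  have hk := hce k
  obtain ⟨lo, hi, hE, hx⟩ := T.exists_cell (Function.update c k (c k - 1)) (fun m => by
    by_cases hm : m = k
    · subst hm; simp; omega
    · simpa [hm] using (hce m).trans_le (hN m))
  have hlh : ∀ m, lo m < hi m := fun m => (hx m).1.trans_lt (hx m).2
  have hxk := hx k
  simp only [Function.update_self] at hxk
  have hxm : ∀ m, m ≠ k → lo m ≤ c m ∧ c m < hi m := fun m hm => by simpa [hm] using hx m
  have h1 := hnc k (c k) ⟨by omega, by omega⟩ lo hi hlh hE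
  have h2 := hnc k (c k - 1) ⟨by omega, by omega⟩ lo hi hlh hE
  have h3 := hmt k (c k) ⟨by omega, by omega⟩ h0 (by omega) lo hi c e hlh hce hE hC
    (by omega) rfl (fun m hm => ⟨by have := hxm m hm; have := hce m; omega, (hxm m hm).2⟩)
  convert hE using 2 <;> funext m <;> by_cases hm : m = k
  · subst hm; simp; omega
  · simp [hm, h3 m hm]
  · subst hm; simp; omega
  · simp [hm, h3 m hm]

/-- Above a cell whose upper `k`-face lies in the upper frame sits the cell with the same
cross-section and unit height. -/
theorem neighbor_up {d : ℕ} {N p : Fin d → ℕ} (T : TMesh d N) (hnc : NoCross N p T.entities)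
    (hmt : Matched N p T.entities) {c e : Fin d → ℕ} (hce : ∀ m, c m < e m)
    (hC : box c e ∈ T.entities) {k : Fin d} (h0 : e k < N k) (hh : N k ≤ e k + halfdeg p k) :
    box (Function.update c k (e k)) (Function.update e k (e k + 1)) ∈ T.entities := by
  have hN := hi_le (fun m => (hce m).le) (T.mem_entity _ hC)
  have hNk := hN k
  have hk := hce k
  obtain ⟨lo, hi, hE, hx⟩ := T.exists_cell (Function.update c k (e k)) (fun m => by
    by_cases hm : m = k
    · subst hm; simp; omega
    · simpa [hm] using (hce m).trans_le (hN m))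
  have hlh : ∀ m, lo m < hi m := fun m => (hx m).1.trans_lt (hx m).2
  have hxk := hx k
  simp only [Function.update_self] at hxk
  have hxm : ∀ m, m ≠ k → lo m ≤ c m ∧ c m < hi m := fun m hm => by simpa [hm] using hx m
  have h1 := hnc k (e k) ⟨by omega, by omega⟩ lo hi hlh hE
  have h2 := hnc k (e k + 1) ⟨by omega, by omega⟩ lo hi hlh hE
  have h3 := hmt k (e k) ⟨by omega, by omega⟩ (by omega) h0 c e lo hi hce hlh hC hE
    rfl (by omega) (fun m hm => ⟨(hxm m hm).2, by have := hxm m hm; have := hce m; omega⟩)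
  convert hE using 2 <;> funext m <;> by_cases hm : m = k
  · subst hm; simp; omega
  · simp [hm, h3 m hm]
  · subst hm; simp; omega
  · simp [hm, h3 m hm]

/-- `(u, v)` is an admissible `k`-component for a cell inside the extended region of
`subdiv(𝒯, box q r, j)`: that of the cell itself or, if `k ≠ j` and the cell touches the frame in
direction `k`, a unit interval in the part of the frame it touches. -/
def Opt {d : ℕ} (N p q r : Fin d → ℕ) (j k : Fin d) (u v : ℕ) : Prop :=
  (u = q k ∧ v = r k) ∨ (k ≠ j ∧ q k = halfdeg p k ∧ v = u + 1 ∧ v ≤ halfdeg p k) ∨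
  (k ≠ j ∧ r k + halfdeg p k = N k ∧ v = u + 1 ∧ N k ≤ u + halfdeg p k ∧ v ≤ N k)

theorem Opt.lt {d : ℕ} {N p q r : Fin d → ℕ} (hqr : ∀ k, q k < r k) {j k : Fin d} {u v : ℕ}
    (h : Opt N p q r j k u v) : u < v := by
  have := hqr k
  unfold Opt at h; omega

/-- The cells filling the extended region: every combination of the admissible components is a
cell of the mesh. The directions are treated one after the other, each by walking outwards through
the unit layers of the frame. -/
theorem opt_mem {d : ℕ} {N p : Fin d → ℕ} (T : TMesh d N) (hnc : NoCross N p T.entities)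
    (hmt : Matched N p T.entities) {q r : Fin d → ℕ} (hqr : ∀ k, q k < r k)
    (hQ : box q r ∈ T.entities) {j : Fin d} {s t : Fin d → ℕ}
    (hst : ∀ k, Opt N p q r j k (s k) (t k)) : box s t ∈ T.entities := by
  classical
  have key : ∀ (A : Finset (Fin d)) (s t : Fin d → ℕ), (∀ k, Opt N p q r j k (s k) (t k)) →
      (∀ k, k ∉ A → s k = q k ∧ t k = r k) → box s t ∈ T.entities := by
    intro A
    induction A using Finset.induction_on with
    | empty =>
      intro s t _ h
      have hs : s = q := funext fun k => (h k (by simp)).1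
      have ht : t = r := funext fun k => (h k (by simp)).2
      rwa [hs, ht]
    | insert k A hkA ih =>
      intro s t hst h
      have hlt : ∀ m, s m < t m := fun m => (hst m).lt hqr
      have h0 : box (Function.update s k (q k)) (Function.update t k (r k)) ∈ T.entities := by
        refine ih _ _ (fun m => ?_) (fun m hm => ?_)
        · by_cases hmk : m = k
          · subst hmk; simp [Opt]
          · simpa [hmk] using hst m
        · by_cases hmk : m = k
          · subst hmk; simp
          · simpa [hmk] using h m (by simp [hmk, hm])
      have hup : ∀ u v : ℕ, u < v → ∀ m, Function.update s k u m < Function.update t k v m := by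
        intro u v huv m
        by_cases hmk : m = k
        · subst hmk; simpa using huv
        · simpa [hmk] using hlt m
      rcases hst k with h1 | ⟨hj, h1, h2, h3⟩ | ⟨hj, h1, h2, h3, h4⟩
      · rw [← h1.1, ← h1.2] at h0
        simpa using h0
      · -- walk down through the lower frame, one unit layer at a time
        have walk : ∀ i, i < halfdeg p k → box (Function.update s k (halfdeg p k - 1 - i))
            (Function.update t k (halfdeg p k - i)) ∈ T.entities := by
          intro i
          induction i with
          | zero =>
            intro hi
            have := neighbor_down T hnc hmt (hup _ _ (hqr k)) h0 (k := k)
              (by simp; omega) (by simp [h1])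
            simpa [h1] using this
          | succ i ihi =>
            intro hi
            have := neighbor_down T hnc hmt (hup _ _ (by omega)) (ihi (by omega)) (k := k)
              (by simp; omega) (by simp; omega)
            simp only [Function.update_self, Function.update_idem] at this
            convert this using 3 <;> omega
        have := walk (halfdeg p k - t k) (by omega)
        rw [show halfdeg p k - 1 - (halfdeg p k - t k) = s k by omega,
          show halfdeg p k - (halfdeg p k - t k) = t k by omega] at this
        simpa using this
      · have walk : ∀ i, i < halfdeg p k → box (Function.update s k (r k + i))
            (Function.update t k (r k + i + 1)) ∈ T.entities := by
          intro i
          induction i with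
          | zero =>
            intro hi
            have := neighbor_up T hnc hmt (hup _ _ (hqr k)) h0 (k := k)
              (by simp; omega) (by simp; omega)
            simpa using this
          | succ i ihi =>
            intro hi
            have := neighbor_up T hnc hmt (hup _ _ (by omega)) (ihi (by omega)) (k := k)
              (by simp; omega) (by simp; omega)
            simpa [add_assoc] using this
        have := walk (s k - r k) (by omega)
        rw [show r k + (s k - r k) = s k by omega, ← h2] at this
        simpa using this
  exact key Finset.univ s t hst (fun k hk => absurd (Finset.mem_univ k) hk)

/-- Admissible components continue across a frame slice, so the extended region ends only at the
boundary of the domain in the directions in which it reaches the frame. -/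
theorem Opt.next {d : ℕ} {N p q r : Fin d → ℕ} {j k : Fin d} (hkj : k ≠ j)
    (hqr : q k < r k) (hq : halfdeg p k ≤ q k) (hr : r k + halfdeg p k ≤ N k)
    {u n : ℕ} (hn : FrameIdx N p k n) (hnN : n < N k) (h : Opt N p q r j k u n) :
    ∃ v, Opt N p q r j k n v := by
  unfold Opt FrameIdx at *
  by_cases h1 : n < halfdeg p k
  · exact ⟨n + 1, by omega⟩
  · by_cases h2 : n = halfdeg p k
    · exact ⟨r k, by omega⟩
    · exact ⟨n + 1, by omega⟩

theorem Opt.prev {d : ℕ} {N p q r : Fin d → ℕ} {j k : Fin d} (hkj : k ≠ j)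
    (hqr : q k < r k) (hq : halfdeg p k ≤ q k) (hr : r k + halfdeg p k ≤ N k)
    {v n : ℕ} (hn : FrameIdx N p k n) (hn0 : 0 < n) (h : Opt N p q r j k n v) :
    ∃ u, Opt N p q r j k u n := by
  unfold Opt FrameIdx at *
  by_cases h1 : n ≤ halfdeg p k
  · exact ⟨n - 1, by omega⟩
  · by_cases h2 : n = r k
    · exact ⟨q k, by omega⟩
    · exact ⟨n - 1, by omega⟩

/-- A point of an integer interval lies in one of its unit subintervals. -/
theorem exists_unit {A B : ℕ} (h : A < B) {x : ℝ} (hx : x ∈ Set.Icc (A : ℝ) B) :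
    ∃ u, A ≤ u ∧ u < B ∧ x ∈ Set.Icc (u : ℝ) ((u + 1 : ℕ) : ℝ) := by
  obtain ⟨h1, h2⟩ := hx
  by_cases hB : x = B
  · refine ⟨B - 1, by omega, by omega, ?_⟩
    rw [Nat.sub_add_cancel (by omega), hB]
    exact ⟨by exact_mod_cast Nat.sub_le B 1, le_rfl⟩
  · have h0 : (0 : ℝ) ≤ x := le_trans (by positivity) h1
    have h3 : x < B := lt_of_le_of_ne h2 hB
    refine ⟨⌊x⌋₊, Nat.le_floor h1, (Nat.floor_lt h0).2 h3, Nat.floor_le h0, ?_⟩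
    push_cast
    exact (Nat.lt_floor_add_one x).le

theorem sInf_box {d : ℕ} {q r : Fin d → ℕ} (hqr : ∀ k, q k < r k) (k : Fin d) :
    sInf (box q r k) = q k := by
  rw [box, comp_of_lt (hqr k), csInf_Ioo (by exact_mod_cast hqr k)]

theorem sSup_box {d : ℕ} {q r : Fin d → ℕ} (hqr : ∀ k, q k < r k) (k : Fin d) :
    sSup (box q r k) = r k := by
  rw [box, comp_of_lt (hqr k), csSup_Ioo (by exact_mod_cast hqr k)]

/-- The extended region is componentwise the union of the closed admissible components. -/
theorem mem_extendD {d : ℕ} {N p q r : Fin d → ℕ} (hqr : ∀ k, q k < r k)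
    {j k : Fin d} {x : ℝ} :
    x ∈ extendD N p (box q r) j k ↔
      ∃ u v, Opt N p q r j k u v ∧ x ∈ Set.Icc (u : ℝ) v := by
  have hqk := hqr k
  unfold extendD
  rw [sInf_box hqr, sSup_box hqr, show closure (box q r k) = Set.Icc (q k : ℝ) (r k) from
    closure_comp (hqr k).le]
  simp only [Set.mem_union, Set.mem_ofPred_eq]
  constructor
  · rintro ((h | ⟨h1, h2, h3⟩) | ⟨h1, h2, h3⟩)
    · exact ⟨q k, r k, Or.inl ⟨rfl, rfl⟩, h⟩
    · have h2 : q k = halfdeg p k := by exact_mod_cast h2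
      by_cases h0 : halfdeg p k = 0
      · refine ⟨q k, r k, Or.inl ⟨rfl, rfl⟩, ?_⟩
        rw [h0] at h2 h3
        have : x = 0 := by simpa using h3
        rw [this, h2]; simp
      · obtain ⟨u, h4, h5, h6⟩ := exists_unit (A := 0) (Nat.pos_of_ne_zero h0) (by simpa using h3)
        exact ⟨u, u + 1, Or.inr (Or.inl ⟨h1, h2, rfl, h5⟩), h6⟩
    · have h2' : r k + halfdeg p k = N k := by
        have : (r k : ℝ) + halfdeg p k = N k := by linarith
        exact_mod_cast this
      rw [← h2] at h3
      by_cases h0 : halfdeg p k = 0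
      · refine ⟨q k, r k, Or.inl ⟨rfl, rfl⟩, ?_⟩
        have h5 : r k = N k := by omega
        rw [← h5] at h3
        have : x = r k := by simpa using h3
        rw [this]
        exact ⟨by exact_mod_cast hqk.le, le_rfl⟩
      · obtain ⟨u, h4, h5, h6⟩ := exists_unit (A := r k) (B := N k) (by omega) h3
        exact ⟨u, u + 1, Or.inr (Or.inr ⟨h1, h2', rfl, by omega, h5⟩), h6⟩
  · rintro ⟨u, v, (⟨rfl, rfl⟩ | ⟨h1, h2, h3, h4⟩ | ⟨h1, h2, h3, h4, h5⟩), hx⟩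
    · exact Or.inl (Or.inl hx)
    · refine Or.inl (Or.inr ⟨h1, by exact_mod_cast h2, ?_, hx.2.trans (by exact_mod_cast h4)⟩)
      exact le_trans (by positivity) hx.1
    · have h2' : (r k : ℝ) + halfdeg p k = N k := by exact_mod_cast h2
      have h4' : (N k : ℝ) ≤ u + halfdeg p k := by exact_mod_cast h4
      refine Or.inr ⟨h1, by linarith, by linarith [hx.1], hx.2.trans (by exact_mod_cast h5)⟩

/-! ### Which entities are split, and reaching the split mesh by bisections -/

/-- The entities that `subdiv(𝒯, box q r, j)` splits. -/
def Sel {d : ℕ} (N p q r : Fin d → ℕ) (j : Fin d) (E : Box d) : Prop :=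
  (∀ k, E k ⊆ extendD N p (box q r) j k) ∧ E j = comp (q j) (r j)

/-- An entity is split exactly when it lies in one of the closed cells filling the extended region
and has the full `j`-th component. If it is contained in the extended region, regularity pushes it
into the closure of a single one of these cells. -/
theorem sel_iff {d : ℕ} {N p : Fin d → ℕ} (T : TMesh d N) {G : Fin d → Finset ℕ}
    (hR : Regular N T.entities G) (hnc : NoCross N p T.entities)
    (hmt : Matched N p T.entities) {q r : Fin d → ℕ} (hqr : ∀ k, q k < r k)
    (hQ : box q r ∈ T.entities) {j : Fin d} {lo hi : Fin d → ℕ} (h : ∀ k, lo k ≤ hi k)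
    (hE : box lo hi ∈ T.entities) :
    Sel N p q r j (box lo hi) ↔ ∃ s t : Fin d → ℕ, (∀ k, Opt N p q r j k (s k) (t k)) ∧
      (∀ k, s k ≤ lo k ∧ hi k ≤ t k) ∧ lo j = q j ∧ hi j = r j := by
  constructor
  · rintro ⟨h1, h2⟩
    have hx : ∀ k, ∃ x, x ∈ comp (lo k) (hi k) := fun k => comp_nonempty (h k)
    choose x hx using hx
    have := fun k => (mem_extendD hqr).1 (h1 k (hx k))
    choose s t hst hxst using this
    refine ⟨s, t, hst, ?_, comp_inj (h j) (hqr j).le h2⟩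
    exact hR.fits lo hi s t h (fun k => (hst k).lt hqr) hE (opt_mem T hnc hmt hqr hQ hst)
      fun k => meets_of_mem (h k) (hx k) (hxst k)
  · rintro ⟨s, t, hst, h1, h2, h3⟩
    refine ⟨fun k x hx => (mem_extendD hqr).2 ⟨s k, t k, hst k, ?_⟩, by rw [box, h2, h3]⟩
    exact (comp_subset_Icc_iff (h k)).2 (h1 k) hx

theorem TMesh.cell_eq_of_le {d : ℕ} {N : Fin d → ℕ} (T : TMesh d N) {c e s t : Fin d → ℕ}
    (hce : ∀ k, c k < e k) (hC : box c e ∈ T.entities) (hS : box s t ∈ T.entities)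
    (h : ∀ k, s k ≤ c k ∧ e k ≤ t k) : c = s ∧ e = t := by
  have hst : ∀ k, s k < t k := fun k => by have := hce k; have := h k; omega
  exact T.box_eq_of_mem (x := fun k => (c k : ℝ) + 1 / 2) (fun k => (hce k).le)
    (fun k => (hst k).le) hC hS (fun k => half_mem_comp le_rfl (hce k))
    (fun k => half_mem_comp (h k).1 ((hce k).trans_le (h k).2))

theorem sel_cell {d : ℕ} {N p : Fin d → ℕ} (T : TMesh d N) {G : Fin d → Finset ℕ}
    (hR : Regular N T.entities G) (hnc : NoCross N p T.entities)
    (hmt : Matched N p T.entities) {q r : Fin d → ℕ} (hqr : ∀ k, q k < r k)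
    (hQ : box q r ∈ T.entities) {j : Fin d} {c e : Fin d → ℕ} (hce : ∀ k, c k < e k)
    (hC : box c e ∈ T.entities) :
    Sel N p q r j (box c e) ↔ ∀ k, Opt N p q r j k (c k) (e k) := by
  rw [sel_iff T hR hnc hmt hqr hQ (fun k => (hce k).le) hC]
  constructor
  · rintro ⟨s, t, hst, h1, -⟩
    obtain ⟨rfl, rfl⟩ := T.cell_eq_of_le hce hC (opt_mem T hnc hmt hqr hQ hst) h1
    exact hst
  · intro h
    refine ⟨c, e, h, fun k => ⟨le_rfl, le_rfl⟩, ?_⟩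
    have := h j
    simp only [Opt] at this
    tauto

theorem splitOn_congr {d : ℕ} {M : Set (Box d)} {j : Fin d} {a m b : ℕ} {P P' : Box d → Prop}
    (h : ∀ E ∈ M, P E ↔ P' E) : splitOn M j a m b P = splitOn M j a m b P' := by
  unfold splitOn
  ext E
  simp only [Set.mem_union, Set.mem_ofPred_eq]
  refine or_congr (and_congr_right fun hE => not_congr (h E hE)) ?_
  exact exists_congr fun F => and_congr_right fun hF => and_congr_left fun _ => h F hF

theorem update_ne_comp {d : ℕ} {j : Fin d} {a m b : ℕ} (ham : a < m) (hmb : m < b)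
    {E F : Box d} (h : E = Function.update F j (comp a m) ∨
      E = Function.update F j (comp m m) ∨ E = Function.update F j (comp m b)) :
    E j ≠ comp a b := by
  intro hE
  rcases h with rfl | rfl | rfl <;> rw [Function.update_self] at hE
  · have := comp_inj ham.le (by omega) hE; omega
  · have := comp_inj le_rfl (by omega) hE; omega
  · have := comp_inj hmb.le (by omega) hE; omega

/-- Successive splits of the same component `comp a b` combine, since no child has `comp a b` as
its `j`-th component. -/
theorem splitOn_splitOn {d : ℕ} {M : Set (Box d)} {j : Fin d} {a m b : ℕ} (ham : a < m)
    (hmb : m < b) {P P' : Box d → Prop} (hP' : ∀ E, P' E → E j = comp a b) :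
    splitOn (splitOn M j a m b P) j a m b P' = splitOn M j a m b (fun E => P E ∨ P' E) := by
  ext E
  constructor
  · rintro (⟨⟨h1, h2⟩ | ⟨F, hF, h1, h2⟩, h3⟩ | ⟨F, ⟨h1, h2⟩ | ⟨F', hF', h1, h2⟩, h4, h3⟩)
    · exact Or.inl ⟨h1, by tauto⟩
    · exact Or.inr ⟨F, hF, Or.inl h1, h2⟩
    · exact Or.inr ⟨F, h1, Or.inr h4, h3⟩
    · exact absurd (hP' _ h4) (update_ne_comp ham hmb h2)
  · rintro (⟨h1, h2⟩ | ⟨F, hF, h1, h2⟩)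
    · exact Or.inl ⟨Or.inl ⟨h1, by tauto⟩, by tauto⟩
    · by_cases hPF : P F
      · exact Or.inl ⟨Or.inr ⟨F, hF, hPF, h2⟩, fun h => update_ne_comp ham hmb h2 (hP' _ h)⟩
      · exact Or.inr ⟨F, Or.inl ⟨hF, hPF⟩, h1.resolve_left hPF, h2⟩

/-- Splitting everything in the closures of finitely many cells with the same `j`-th component is
a sequence of bisections. -/
theorem reach_split {d : ℕ} {N : Fin d → ℕ} (T : TMesh d N) {j : Fin d} {a m b : ℕ}
    (hab : a < b) (hm : a + b = 2 * m) (S : Finset ((Fin d → ℕ) × (Fin d → ℕ)))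
    (hS : ∀ s ∈ S, (∀ k, s.1 k < s.2 k) ∧ box s.1 s.2 ∈ T.entities ∧ s.1 j = a ∧ s.2 j = b) :
    Relation.ReflTransGen (BisectStep N) T.entities
      (splitOn T.entities j a m b fun E => ∃ s ∈ S, InClosure s.1 s.2 j E) := by
  classical
  have ham : a < m := by omega
  have hmb : m < b := by omega
  induction S using Finset.induction_on with
  | empty =>
    have : (splitOn T.entities j a m b fun E =>
        ∃ s ∈ (∅ : Finset ((Fin d → ℕ) × (Fin d → ℕ))), InClosure s.1 s.2 j E) =
        T.entities := by
      ext E; simp [splitOn]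
    rw [this]
  | insert s S hs ih =>
    refine (ih fun s hs => hS s (Finset.mem_insert_of_mem hs)).tail ?_
    obtain ⟨hlt, hmem, hsa, hsb⟩ := hS s (Finset.mem_insert_self _ _)
    have hle := fun k => (hlt k).le
    have hN := hi_le hle (T.mem_entity _ hmem)
    refine ⟨box s.1 s.2, Or.inl ⟨hmem, ?_⟩, j, a, b, m, fun k =>
      ⟨s.1 k, s.2 k, hlt k, hN k, comp_of_lt (hlt k)⟩, ?_, hm, ?_⟩
    · rintro ⟨t, ht, hst⟩
      have h1 := hS t (Finset.mem_insert_of_mem ht)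
      have h2 := T.cell_eq_of_le hlt hmem h1.2.1 ((inClosure_box h1.1 hle).1 hst).1
      exact hs (by rwa [Prod.ext h2.1 h2.2])
    · rw [box, hsa, hsb, comp_of_lt hab]
    · rw [midSplit_eq _ _ _ _ ham hmb (by rw [box, hsa, hsb]),
        splitOn_splitOn ham hmb fun E h => h.2]
      refine splitOn_congr fun E _ => ?_
      rw [Finset.exists_mem_insert, or_comm]
      refine or_congr Iff.rfl ?_
      simp only [InClosure, hsa, hsb]

theorem comp_split {a m b : ℕ} (ham : a < m) (hmb : m < b) {x : ℝ} :
    x ∈ comp a b ↔ x ∈ comp a m ∨ x ∈ comp m m ∨ x ∈ comp m b := by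
  have h1 : (a : ℝ) < m := by exact_mod_cast ham
  have h2 : (m : ℝ) < b := by exact_mod_cast hmb
  rw [comp_of_lt ham, comp_of_lt hmb, comp_of_lt (ham.trans hmb), comp_self]
  simp only [Set.mem_Ioo, Set.mem_singleton_iff]
  constructor
  · rintro ⟨h3, h4⟩
    rcases lt_trichotomy x m with h | h | h <;> tauto
  · rintro (h | rfl | h)
    · exact ⟨h.1, h.2.trans h2⟩
    · exact ⟨h1, h2⟩
    · exact ⟨h1.trans h.1, h.2⟩

theorem mem_toSet_update {d : ℕ} {F : Box d} {j : Fin d} {A : Set ℝ} {x : Fin d → ℝ} :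
    x ∈ toSet (Function.update F j A) ↔ x j ∈ A ∧ ∀ k, k ≠ j → x k ∈ F k := by
  simp only [toSet, Set.mem_pi, Set.mem_univ, true_imp_iff]
  constructor
  · intro h
    refine ⟨by simpa using h j, fun k hk => by simpa [hk] using h k⟩
  · rintro ⟨h1, h2⟩ k
    by_cases hk : k = j
    · subst hk; simpa using h1
    · simpa [hk] using h2 k hk

theorem splitOn_finite {d : ℕ} {M : Set (Box d)} (hM : M.Finite) {j : Fin d} {a m b : ℕ}
    {P : Box d → Prop} : (splitOn M j a m b P).Finite := by
  refine (hM.union ((hM.image fun F => Function.update F j (comp a m)).union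
    ((hM.image fun F => Function.update F j (comp m m)).union
      (hM.image fun F => Function.update F j (comp m b))))).subset ?_
  rintro E (h | ⟨F, hF, -, h | h | h⟩)
  · exact Or.inl h.1
  · exact Or.inr (Or.inl ⟨F, hF, h.symm⟩)
  · exact Or.inr (Or.inr (Or.inl ⟨F, hF, h.symm⟩))
  · exact Or.inr (Or.inr (Or.inr ⟨F, hF, h.symm⟩))

theorem splitOn_union {d : ℕ} {M : Set (Box d)} {j : Fin d} {a m b : ℕ} (ham : a < m)
    (hmb : m < b) {P : Box d → Prop} (hP : ∀ E, P E → E j = comp a b) :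
    (⋃ E ∈ splitOn M j a m b P, toSet E) = ⋃ E ∈ M, toSet E := by
  ext x
  simp only [Set.mem_iUnion, exists_prop]
  constructor
  · rintro ⟨E, h | ⟨F, hF, hPF, h⟩, hx⟩
    · exact ⟨E, h.1, hx⟩
    · refine ⟨F, hF, ?_⟩
      rw [← Function.update_eq_self j F, mem_toSet_update, hP F hPF, comp_split ham hmb]
      rcases h with rfl | rfl | rfl <;> rw [mem_toSet_update] at hx <;> tauto
  · rintro ⟨F, hF, hx⟩
    by_cases hPF : P F
    · rw [← Function.update_eq_self j F, mem_toSet_update, hP F hPF, comp_split ham hmb] at hx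
      obtain ⟨h | h | h, hx⟩ := hx
      · exact ⟨_, Or.inr ⟨F, hF, hPF, Or.inl rfl⟩, mem_toSet_update.2 ⟨h, hx⟩⟩
      · exact ⟨_, Or.inr ⟨F, hF, hPF, Or.inr (Or.inl rfl)⟩, mem_toSet_update.2 ⟨h, hx⟩⟩
      · exact ⟨_, Or.inr ⟨F, hF, hPF, Or.inr (Or.inr rfl)⟩, mem_toSet_update.2 ⟨h, hx⟩⟩
    · exact ⟨F, Or.inl ⟨hF, hPF⟩, hx⟩

/-- The parent of an entity of a split mesh, located at a point of that entity. -/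
theorem splitOn_parent {d : ℕ} {M : Set (Box d)} {j : Fin d} {a m b : ℕ} (ham : a < m)
    (hmb : m < b) {P : Box d → Prop} (hP : ∀ E, P E → E j = comp a b) {E : Box d}
    (hE : E ∈ splitOn M j a m b P) {x : Fin d → ℝ} (hx : x ∈ toSet E) :
    ∃ F ∈ M, x ∈ toSet F ∧ ((¬ P F ∧ E = F) ∨ (P F ∧ ∃ I ∈ ({(a, m), (m, m), (m, b)} : Set (ℕ × ℕ)),
      x j ∈ comp I.1 I.2 ∧ E = Function.update F j (comp I.1 I.2))) := by
  rcases hE with h | ⟨F, hF, hPF, h⟩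
  · exact ⟨E, h.1, hx, Or.inl ⟨h.2, rfl⟩⟩
  · have key : ∀ I ∈ ({(a, m), (m, m), (m, b)} : Set (ℕ × ℕ)),
        E = Function.update F j (comp I.1 I.2) → ∃ F ∈ M, x ∈ toSet F ∧ ((¬ P F ∧ E = F) ∨
        (P F ∧ ∃ I ∈ ({(a, m), (m, m), (m, b)} : Set (ℕ × ℕ)),
          x j ∈ comp I.1 I.2 ∧ E = Function.update F j (comp I.1 I.2))) := by
      rintro I hI rfl
      rw [mem_toSet_update] at hx
      refine ⟨F, hF, ?_, Or.inr ⟨hPF, I, hI, hx.1, rfl⟩⟩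
      rw [← Function.update_eq_self j F, mem_toSet_update, hP F hPF, comp_split ham hmb]
      refine ⟨?_, hx.2⟩
      rcases hI with rfl | rfl | rfl <;> tauto
    rcases h with h | h | h
    · exact key (a, m) (by simp) h
    · exact key (m, m) (by simp) h
    · exact key (m, b) (by simp) h

theorem splitOn_disjoint {d : ℕ} {N : Fin d → ℕ} (T : TMesh d N) {j : Fin d} {a m b : ℕ}
    (ham : a < m) (hmb : m < b) {P : Box d → Prop} (hP : ∀ E, P E → E j = comp a b) :
    ∀ E ∈ splitOn T.entities j a m b P, ∀ F ∈ splitOn T.entities j a m b P, E ≠ F →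
      toSet E ∩ toSet F = ∅ := by
  intro E hE F hF hne
  refine Set.eq_empty_iff_forall_notMem.2 ?_
  rintro x ⟨hxE, hxF⟩
  apply hne
  obtain ⟨E', hE', hxE', h⟩ := splitOn_parent ham hmb hP hE hxE
  obtain ⟨F', hF', hxF', h'⟩ := splitOn_parent ham hmb hP hF hxF
  obtain rfl := T.eq_of_mem hE' hF' hxE' hxF'
  rcases h with ⟨h1, rfl⟩ | ⟨h1, I, hI, hxI, rfl⟩
  · rcases h' with ⟨h2, rfl⟩ | ⟨h2, -⟩
    · rfl
    · exact absurd h2 h1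
  · rcases h' with ⟨h2, -⟩ | ⟨h2, I', hI', hxI', rfl⟩
    · exact absurd h1 h2
    · suffices I = I' by rw [this]
      rcases hI with rfl | rfl | rfl <;> rcases hI' with rfl | rfl | rfl <;>
        first
        | rfl
        | (exfalso
           simp only [comp_of_lt ham, comp_of_lt hmb, comp_self, Set.mem_Ioo,
             Set.mem_singleton_iff] at hxI hxI'
           linarith [hxI.1, hxI.2, hxI'.1, hxI'.2])
        | (exfalso
           simp only [comp_of_lt ham, comp_of_lt hmb, comp_self, Set.mem_Ioo,
             Set.mem_singleton_iff] at hxI hxI'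
           linarith [hxI.1, hxI.2])
        | (exfalso
           simp only [comp_of_lt ham, comp_of_lt hmb, comp_self, Set.mem_Ioo,
             Set.mem_singleton_iff] at hxI hxI'
           linarith [hxI'.1, hxI'.2])

/-! ### The refined mesh and its admissibility -/

/-- The outcome of Algorithm `subdiv` is a T-mesh: it is reached by bisecting, one after the
other, the cells filling the extended region. -/
theorem exists_subdiv {d : ℕ} {N p : Fin d → ℕ} (T : TMesh d N) {G : Fin d → Finset ℕ}
    (hR : Regular N T.entities G) (hnc : NoCross N p T.entities)
    (hmt : Matched N p T.entities) {q r : Fin d → ℕ} (hqr : ∀ k, q k < r k)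
    (hQ : box q r ∈ T.entities) {j : Fin d} {m : ℕ} (hm : q j + r j = 2 * m) :
    ∃ T' : TMesh d N, T'.entities = splitOn T.entities j (q j) m (r j) (Sel N p q r j) := by
  have hj := hqr j
  have ham : q j < m := by omega
  have hmb : m < r j := by omega
  have hP : ∀ E, Sel N p q r j E → E j = comp (q j) (r j) := fun E h => h.2
  refine ⟨⟨_, splitOn_finite T.finite, splitOn_entity T.mem_entity ham hmb hP,
    (splitOn_union ham hmb hP).trans T.union_eq, splitOn_disjoint T ham hmb hP, ?_⟩, rfl⟩
  obtain ⟨M₀, hM₀, hr⟩ := T.constructed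
  refine ⟨M₀, hM₀, hr.trans ?_⟩
  have hmem : ∀ s : (Fin d → ℕ) × (Fin d → ℕ), (∀ k, Opt N p q r j k (s.1 k) (s.2 k)) →
      box s.1 s.2 ∈ T.entities := fun s hs => opt_mem T hnc hmt hqr hQ hs
  have hfin : {s : (Fin d → ℕ) × (Fin d → ℕ) | ∀ k, Opt N p q r j k (s.1 k) (s.2 k)}.Finite := by
    refine ((Set.finite_Iic N).prod (Set.finite_Iic N)).subset fun s hs => ?_
    have h1 : ∀ k, s.1 k ≤ s.2 k := fun k => ((hs k).lt hqr).le
    have h2 := hi_le h1 (T.mem_entity _ (hmem s hs))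
    exact ⟨fun k => (h1 k).trans (h2 k), h2⟩
  have hoj : ∀ {u v}, Opt N p q r j j u v → u = q j ∧ v = r j := by
    intro u v h; simp only [Opt] at h; tauto
  have := reach_split T hj hm hfin.toFinset (j := j) (fun s hs => by
    rw [Set.Finite.mem_toFinset] at hs
    exact ⟨fun k => (hs k).lt hqr, hmem s hs, hoj (hs j)⟩)
  convert this using 1
  refine splitOn_congr fun E hE => ?_
  obtain ⟨lo, hi, h, -, rfl⟩ := exists_box (T.mem_entity E hE)
  rw [sel_iff T hR hnc hmt hqr hQ h hE]
  constructor
  · rintro ⟨s, t, hst, h1, h2, h3⟩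
    refine ⟨(s, t), by simpa using hst, ?_⟩
    rw [inClosure_box (fun k => (hst k).lt hqr) h]
    have := hoj (hst j)
    exact ⟨h1, by omega⟩
  · rintro ⟨s, hs, h1⟩
    rw [Set.Finite.mem_toFinset] at hs
    rw [inClosure_box (fun k => (hs k).lt hqr) h] at h1
    have := hoj (hs j)
    exact ⟨s.1, s.2, hs, h1.1, by omega⟩

/-- Splitting only enlarges the skeletons: a split hyperface is covered by the closures of its two
halves. -/
theorem skel_mono {d : ℕ} {N : Fin d → ℕ} (T T' : TMesh d N) {j : Fin d} {a m b : ℕ}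
    (ham : a < m) (hmb : m < b) {P : Box d → Prop} (hP : ∀ E, P E → E j = comp a b)
    (hT' : T'.entities = splitOn T.entities j a m b P) (k : Fin d) : skel T k ⊆ skel T' k := by
  intro x hx
  simp only [skel, Set.mem_iUnion] at hx ⊢
  obtain ⟨F, ⟨⟨hF, hcard⟩, hr⟩, hxF⟩ := hx
  by_cases hPF : P F
  · obtain ⟨lo, hi, h, -, rfl⟩ := exists_box (T.mem_entity F hF)
    obtain ⟨h1, h2⟩ := comp_inj (h j) (ham.trans hmb).le (hP _ hPF)
    have hk : lo k = hi k := (comp_singleton (h k)).1 hr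
    have hkj : k ≠ j := by rintro rfl; omega
    rw [closure_toSet_box h] at hxF
    have key : ∀ u v : ℕ, u < v → ((u = a ∧ v = m) ∨ (u = m ∧ v = b)) →
        x j ∈ Set.Icc (u : ℝ) v → ∃ F, ∃ (_ : F ∈ {F | F ∈ Hdim T' (d - 1) ∧ ∃ r : ℝ, F k = {r}}),
          x ∈ closure (toSet F) := by
      intro u v huv hc hxj
      have h' : ∀ i, Function.update lo j u i ≤ Function.update hi j v i := by
        intro i
        by_cases hi : i = j
        · subst hi; simpa using huv.le
        · simpa [hi] using h i
      refine ⟨box (Function.update lo j u) (Function.update hi j v), ⟨⟨?_, ?_⟩, ?_⟩, ?_⟩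
      · rw [hT', mem_splitOn T.mem_entity ham hmb hP h']
        right
        refine ⟨lo, hi, h, hF, hPF, h1, h2, fun i hi => by simp [hi], ?_⟩
        simp only [Function.update_self]
        tauto
      · rw [← hcard, singDirs_box h', singDirs_box h]
        congr 1
        ext i
        by_cases hi : i = j
        · subst hi
          simp only [Set.mem_ofPred_eq, Function.update_self]
          omega
        · simp [hi]
      · refine ⟨hi k, ?_⟩
        simp [box, hkj, hk, comp_self]
      · rw [closure_toSet_box h']
        intro i _
        by_cases hi : i = j
        · subst hi; simpa using hxj
        · simpa [hi] using hxF i trivial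
    have hxj := hxF j trivial
    simp only [h1, h2] at hxj
    rcases le_total (x j) m with hxm | hxm
    · exact key a m ham (by tauto) ⟨hxj.1, hxm⟩
    · exact key m b hmb (by tauto) ⟨hxm, hxj.2⟩
  · exact ⟨F, ⟨⟨hT' ▸ Or.inl ⟨hF, hPF⟩, hcard⟩, hr⟩, hxF⟩

/-- The parent of a cell of a split mesh, in terms of corners. -/
theorem cell_parent {d : ℕ} {N : Fin d → ℕ} {M : Set (Box d)} (hM : ∀ E ∈ M, IsMeshEntity N E)
    {j : Fin d} {a m b : ℕ} (ham : a < m) (hmb : m < b) {P : Box d → Prop}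
    (hP : ∀ E, P E → E j = comp a b) {c e : Fin d → ℕ} (hce : ∀ k, c k < e k)
    (hC : box c e ∈ splitOn M j a m b P) :
    ∃ l u : Fin d → ℕ, (∀ k, l k < u k) ∧ box l u ∈ M ∧ (∀ k, k ≠ j → c k = l k ∧ e k = u k) ∧
      ((¬ P (box l u) ∧ c j = l j ∧ e j = u j) ∨ (P (box l u) ∧ l j = a ∧ u j = b ∧
        ((c j = a ∧ e j = m) ∨ (c j = m ∧ e j = b)))) := by
  rcases (mem_splitOn hM ham hmb hP fun k => (hce k).le).1 hC with
    ⟨h1, h2⟩ | ⟨l, u, h1, h2, h3, h4, h5, h6, h7⟩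
  · exact ⟨c, e, hce, h1, fun k _ => ⟨rfl, rfl⟩, Or.inl ⟨h2, rfl, rfl⟩⟩
  · refine ⟨l, u, fun k => ?_, h2, h6, Or.inr ⟨h3, h4, h5, ?_⟩⟩
    · by_cases hk : k = j
      · subst hk; omega
      · have := h6 k hk; have := hce k; omega
    · have := hce j
      omega

/-- Conformity across frame slices survives `subdiv`. Across slices orthogonal to `j` this is
inherited from the parents, as the new midpoint avoids the frame. Across slices orthogonal to
`k ≠ j`, the two parents have the same cross-section, and one of them is split exactly when the other
is, because the extended region continues across frame slices. -/
theorem matched_split {d : ℕ} {N p : Fin d → ℕ} (T : TMesh d N) {G : Fin d → Finset ℕ}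
    (hR : Regular N T.entities G) (hnc : NoCross N p T.entities)
    (hmt : Matched N p T.entities) {q r : Fin d → ℕ} (hqr : ∀ k, q k < r k)
    (hQ : box q r ∈ T.entities) (hq : ∀ k, halfdeg p k ≤ q k)
    (hr : ∀ k, r k + halfdeg p k ≤ N k) {j : Fin d} {m : ℕ} (hm : q j + r j = 2 * m) :
    Matched N p (splitOn T.entities j (q j) m (r j) (Sel N p q r j)) := by
  have hj := hqr j
  have hqj := hq j
  have hrj := hr j
  have ham : q j < m := by omega
  have hmb : m < r j := by omega
  have hP : ∀ E, Sel N p q r j E → E j = comp (q j) (r j) := fun E h => h.2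
  intro k n hn hn0 hnN c e c' e' hce hce' hC hC' hek hck hov
  obtain ⟨l, u, hlu, hL, hoff, hcs⟩ := cell_parent T.mem_entity ham hmb hP hce hC
  obtain ⟨l', u', hlu', hL', hoff', hcs'⟩ := cell_parent T.mem_entity ham hmb hP hce' hC'
  have hle : l j ≤ c j ∧ e j ≤ u j := by omega
  have hle' : l' j ≤ c' j ∧ e' j ≤ u' j := by omega
  have hov' : ∀ i, i ≠ k → l i < u' i ∧ l' i < u i := by
    intro i hi
    have h1 := hov i hi
    by_cases hij : i = j
    · subst hij; omega
    · have := hoff i hij; have := hoff' i hij; omega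
  by_cases hkj : k = j
  · subst hkj
    have hnm : n ≠ m := by unfold FrameIdx at hn; omega
    have := hmt k n hn hn0 hnN l u l' u' hlu hlu' hL hL' (by omega) (by omega) hov'
    intro i hi
    have h1 := hoff i hi; have h2 := hoff' i hi; have h3 := this i hi
    omega
  · have hk := hoff k hkj
    have hk' := hoff' k hkj
    have heq := hmt k n hn hn0 hnN l u l' u' hlu hlu' hL hL' (by omega) (by omega) hov'
    have hsel : Sel N p q r j (box l u) ↔ Sel N p q r j (box l' u') := by
      rw [sel_cell T hR hnc hmt hqr hQ hlu hL, sel_cell T hR hnc hmt hqr hQ hlu' hL']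
      constructor
      · intro h
        have hok := h k
        rw [show u k = n by omega] at hok
        obtain ⟨v, hv⟩ := Opt.next hkj (hqr k) (hq k) (hr k) hn hnN hok
        have hst : ∀ i, Opt N p q r j i (l' i) (Function.update u' k v i) := by
          intro i
          by_cases hi : i = k
          · subst hi; rw [Function.update_self, show l' i = n by omega]; exact hv
          · rw [Function.update_of_ne hi, ← (heq i hi).1, ← (heq i hi).2]; exact h i
        have hlt := fun i => (hst i).lt hqr
        have := T.box_eq_of_mem (x := fun i => (l' i : ℝ) + 1 / 2) (fun i => (hlu' i).le)
          (fun i => (hlt i).le) hL' (opt_mem T hnc hmt hqr hQ hst)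
          (fun i => half_mem_comp le_rfl (hlu' i)) (fun i => half_mem_comp le_rfl (hlt i))
        rw [← this.2] at hst
        exact hst
      · intro h
        have hok := h k
        rw [show l' k = n by omega] at hok
        obtain ⟨v, hv⟩ := Opt.prev hkj (hqr k) (hq k) (hr k) hn hn0 hok
        have hst : ∀ i, Opt N p q r j i (Function.update l k v i) (u i) := by
          intro i
          by_cases hi : i = k
          · subst hi; rw [Function.update_self, show u i = n by omega]; exact hv
          · rw [Function.update_of_ne hi, (heq i hi).1, (heq i hi).2]; exact h i
        have hlt := fun i => (hst i).lt hqr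
        have h1 : ∀ i, l i ≤ u i - 1 ∧ u i - 1 < u i := fun i => by have := hlu i; omega
        have h2 : ∀ i, Function.update l k v i ≤ u i - 1 := fun i => by have := hlt i; omega
        have := T.box_eq_of_mem (x := fun i => ((u i - 1 : ℕ) : ℝ) + 1 / 2) (fun i => (hlu i).le)
          (fun i => (hlt i).le) hL (opt_mem T hnc hmt hqr hQ hst)
          (fun i => half_mem_comp (h1 i).1 (h1 i).2) (fun i => half_mem_comp (h2 i) (h1 i).2)
        rw [← this.1] at hst
        exact hst
    intro i hi
    have h1 := heq i hi
    by_cases hij : i = j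
    · subst hij
      have h2 := hov i hi
      rcases hcs with h3 | h3 <;> rcases hcs' with h4 | h4
      · omega
      · exact absurd (hsel.2 h4.1) h3.1
      · exact absurd (hsel.1 h3.1) h4.1
      · omega
    · have h2 := hoff i hij; have h3 := hoff' i hij
      omega

/-- A regular mesh that is conforming across frame slices has no T-junction with direction `k` in
`FR^(k)`. With orthogonal direction `k`, the associated cell is crossed by a frame slice. With
pointing direction `k`, the associated cell and a cell ending at the T-junction in the orthogonal
direction lie on opposite sides of a frame slice with different cross-sections. -/
theorem noTJ_of_matched {d : ℕ} {N p : Fin d → ℕ} (T : TMesh d N) {G : Fin d → Finset ℕ}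
    (hR : Regular N T.entities G) (hnc : NoCross N p T.entities)
    (hmt : Matched N p T.entities) {k : Fin d} {J R : Box d} {i l : Fin d}
    (hJ : IsTJunction T J) (hD : TJData T J R i l) (hk : i = k ∨ l = k) :
    ¬ toSet J ⊆ frameRegion N p k := by
  intro hfr
  obtain ⟨⟨hJm, hcard⟩, hbd, -⟩ := hJ
  obtain ⟨hRm, hJR, -, hil, hJi, hJl, hsub, -, hfrl⟩ := hD
  obtain ⟨lo, hi, h, hN, rfl⟩ := exists_box (T.mem_entity J hJm)
  obtain ⟨c, e, hce, -, rfl⟩ := exists_box (T.mem_entity R hRm.1)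
  obtain ⟨hRm, hlt⟩ := (mem_Hdim_self T hce).1 hRm
  replace hJi : lo i = hi i := (comp_singleton (h i)).1 hJi
  replace hJl : lo l = hi l := (comp_singleton (h l)).1 hJl
  have hpt : ∀ s, lo s = hi s → ((lo s : ℕ) : ℝ) ∈ box lo hi s := by
    intro s hs; rw [box, nat_mem_comp]; omega
  have hri : c i < lo i ∧ lo i < e i := by
    have := hsub (hpt i hJi)
    rw [box, nat_mem_comp] at this
    have := hlt i; omega
  have hsl : lo l = c l ∨ lo l = e l := by
    have := hfrl (hpt l hJl)
    rw [box, comp_of_lt (hlt l), frontier_Ioo (by exact_mod_cast hlt l)] at this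
    rcases this with h1 | h1
    · left; exact_mod_cast h1
    · right; exact_mod_cast Set.mem_singleton_iff.1 h1
  have hx : ∀ s, ∃ x, x ∈ comp (lo s) (hi s) := fun s => comp_nonempty (h s)
  choose x hx using hx
  have hxJ : x ∈ toSet (box lo hi) := mem_toSet_box.2 hx
  have hxR := frontier_subset_closure (hJR hxJ)
  rw [closure_toSet_box hce] at hxR
  have hin := hR.fits lo hi c e h hlt hJm hRm fun s =>
    meets_of_mem (h s) (hx s) (hxR s trivial)
  have hJk : lo k = hi k := by rcases hk with rfl | rfl <;> assumption
  have hNk := hN k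
  have hfi : FrameIdx N p k (lo k) := by
    have h1 := (hfr hxJ).2
    have h2 := hx k
    rw [← hJk, comp_self] at h2
    rw [Set.mem_singleton_iff.1 h2] at h1
    refine ⟨by omega, ?_⟩
    rcases h1 with h1 | h1
    · left; exact_mod_cast h1.2
    · right
      have : (N k : ℝ) ≤ lo k + halfdeg p k := by linarith [h1.1]
      exact_mod_cast this
  rcases hk with rfl | rfl
  · exact hnc i (lo i) hfi c e hlt hRm hri
  have hint : 0 < lo l ∧ lo l < N l := by
    by_contra hcon
    refine hbd fun y hy => ?_
    have hyd : y ∈ domain N := T.union_eq ▸ Set.mem_biUnion hJm hy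
    refine ⟨subset_closure hyd, fun hyi => ?_⟩
    rw [domain, interior_pi_set Set.finite_univ] at hyi
    have h1 := hyi l trivial
    change y l ∈ interior (Set.Icc (0 : ℝ) (N l)) at h1
    rw [interior_Icc] at h1
    have h2 := mem_toSet_box.1 hy l
    rw [← hJk, comp_self] at h2
    rw [Set.mem_singleton_iff.1 h2] at h1
    exact hcon ⟨by exact_mod_cast h1.1, by exact_mod_cast h1.2⟩
  have hsing : singDirs (box lo hi) = {i, l} := by
    have hd : 2 ≤ d := by
      have := i.2; have := l.2
      have : (i : ℕ) ≠ l := fun h => hil (Fin.ext h)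
      omega
    symm
    refine Set.eq_of_subset_of_ncard_le ?_ ?_ (Set.toFinite _)
    · rw [singDirs_box h]
      rintro s (rfl | rfl)
      · exact hJi
      · exact hJl
    · rw [hcard, Set.ncard_pair hil]; omega
  have hother : ∀ s, s ≠ i → s ≠ l → lo s < hi s := by
    intro s h1 h2
    refine lt_of_le_of_ne (h s) fun h3 => ?_
    have : s ∈ singDirs (box lo hi) := by rw [singDirs_box h]; exact h3
    rw [hsing] at this
    rcases this with h4 | h4
    · exact h1 h4
    · exact h2 h4
  obtain ⟨c', e', hlt', hC', hin', hend⟩ := hR.wit lo hi h hJm i hJi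
  have hck := hnc l (lo l) hfi c' e' hlt' hC'
  have hov : ∀ s, s ≠ l → c s < e' s ∧ c' s < e s := by
    intro s hs
    have h1 := hin s; have h2 := hin' s; have h3 := hlt s; have h4 := hlt' s
    by_cases hsi : s = i
    · subst hsi; omega
    · have := hother s hsi hs; omega
  have hinl := hin l; have hinl' := hin' l; have hltl := hlt l; have hltl' := hlt' l
  have hsame : ¬ (c l < e' l ∧ c' l < e l) := by
    intro hl
    have hov' : ∀ s, c s < e' s ∧ c' s < e s := by
      intro s
      by_cases hs : s = l
      · subst hs; exact hl
      · exact hov s hs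
    have h5 : ∀ s, c s ≤ max (c s) (c' s) ∧ c' s ≤ max (c s) (c' s) ∧ max (c s) (c' s) < e s ∧
        max (c s) (c' s) < e' s := by
      intro s
      have := hov' s; have := hlt s; have := hlt' s; omega
    have := T.box_eq_of_mem (x := fun s => ((max (c s) (c' s) : ℕ) : ℝ) + 1 / 2) hce
      (fun s => (hlt' s).le) hRm hC' (fun s => half_mem_comp (h5 s).1 (h5 s).2.2.1)
      (fun s => half_mem_comp (h5 s).2.1 (h5 s).2.2.2)
    rw [← this.1, ← this.2] at hend
    omega
  rcases hsl with hsl | hsl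
  · have := hmt l (lo l) hfi hint.1 hint.2 c' e' c e hlt' hlt hC' hRm (by omega) hsl.symm
      (fun s hs => (hov s hs).symm) i hil
    omega
  · have := hmt l (lo l) hfi hint.1 hint.2 c e c' e' hlt hlt' hRm hC' hsl.symm (by omega)
      hov i hil
    omega

end TSpline

/-- Bisecting a cell `Q ⊆ AR_p` of an admissible T-mesh at an integer
midpoint via Algorithm `subdiv` yields again an admissible T-mesh. -/
theorem TSpline.subdiv_preserves_admissibility
    {d : ℕ} {N p : Fin d → ℕ} (T : TSpline.TMesh d N)
    (hadm : TSpline.Admissible p T)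
    (Q : TSpline.Box d) (hQ : Q ∈ TSpline.Hdim T d)
    (hQar : TSpline.toSet Q ⊆ TSpline.activeRegion N p)
    (j : Fin d) (a b mid : ℕ)
    (hQj : Q j = Set.Ioo (a : ℝ) (b : ℝ)) (hmid : a + b = 2 * mid) :
    ∃ T' : TSpline.TMesh d N,
      T'.entities = TSpline.subdivEntities N p T.entities Q j ∧
      TSpline.Admissible p T' := by
  obtain ⟨q, r, hle, hrN, rfl⟩ := exists_box (T.mem_entity Q hQ.1)
  obtain ⟨hQm, hqr⟩ := (mem_Hdim_self T hle).1 hQ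
  have hab : a < b := by
    obtain ⟨x, hx⟩ := comp_nonempty (hle j)
    rw [show comp (q j) (r j) = Set.Ioo (a : ℝ) b from hQj] at hx
    exact_mod_cast hx.1.trans hx.2
  obtain ⟨rfl, rfl⟩ : q j = a ∧ r j = b :=
    comp_inj (hle j) hab.le (hQj.trans (comp_of_lt hab).symm)
  have ham : q j < mid := by omega
  have hmb : mid < r j := by omega
  have hN : ∀ k, 0 < N k := fun k => by have := hqr k; have := hrN k; omega
  -- the active region is closed, so it contains the corners `q` and `r` of `Q`
  have hcl : closure (toSet (box q r)) ⊆ activeRegion N p :=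
    closure_minimal hQar (isClosed_set_pi fun k _ => isClosed_Icc)
  rw [closure_toSet_box hle] at hcl
  have hq : ∀ k, halfdeg p k ≤ q k := by
    intro k
    have h1 : (fun k => (q k : ℝ)) ∈ activeRegion N p :=
      hcl fun k _ => ⟨le_rfl, by exact_mod_cast hle k⟩
    have h2 : (halfdeg p k : ℝ) ≤ q k := (h1 k trivial).1
    exact_mod_cast h2
  have hr : ∀ k, r k + halfdeg p k ≤ N k := by
    intro k
    have h1 : (fun k => (r k : ℝ)) ∈ activeRegion N p :=
      hcl fun k _ => ⟨by exact_mod_cast hle k, le_rfl⟩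
    have h2 := (h1 k trivial).2
    have : (r k : ℝ) + halfdeg p k ≤ N k := by simp only at h2; linarith
    exact_mod_cast this
  obtain ⟨G, hR⟩ := T.regular hN
  have hnc := noCross_of_slices T hadm.2
  have hmt := matched_of_admissible T hR hadm
  obtain ⟨T', hT'⟩ := exists_subdiv T hR hnc hmt hqr hQm hmid
  have hslices : ∀ k : Fin d, ∀ n : ℕ,
      (n ≤ halfdeg p k ∨ (N k - halfdeg p k ≤ n ∧ n ≤ N k)) → slice N k n ⊆ skel T' k :=
    fun k n hn => (hadm.2 k n hn).trans
      (skel_mono T T' ham hmb (fun _ h => h.2) hT' k)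
  refine ⟨T', ?_, ?_, hslices⟩
  · rw [hT', subdivEntities, sInf_box hqr, sSup_box hqr]
    have : ((q j : ℝ) + r j) / 2 = (mid : ℕ) := by
      have : (q j : ℝ) + r j = 2 * mid := by exact_mod_cast hmid
      rw [this]; ring
    rw [this, midSplit_eq _ _ _ _ ham hmb rfl]
    rfl
  · obtain ⟨G', hR'⟩ := T'.regular hN
    have hmt' : Matched N p T'.entities := by
      rw [hT']; exact matched_split T hR hnc hmt hqr hQm hq hr hmid
    intro k J R i l hJ hD hk
    exact noTJ_of_matched T' hR' (noCross_of_slices T' hslices) hmt' hJ hD hk
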